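/- arXiv:1607.05035 — 2 statements merged into one kernel-verified Lean document; each statement's English description precedes it below -/
import Mathlib

section
/- There exists a constant c > 0 independent of the mesh size h and the spline degree p such that for every α ∈ {0,1}^2, the smoothing operator L_α (defined by L_{00} = (1+2σ) M_0 ⊗ M_0, L_{01} = M_0 ⊗ ((1+σ)M_1 + K_1), L_{10} = ((1+σ)M_1 + K_1) ⊗ M_0, L_{11} = M_1 ⊗ M_1 + K_1 ⊗ M_1 + M_1 ⊗ K_1, with σ = 12 h^{-2}) is spectrally bounded from above by c · Q_α′ (A + h^{-2} M ⊗ M) Q_α, i.e. ⟨L_α v, v⟩ ≤ c ⟨Q_α′(A + h^{-2} M⊗M)Q_α v, v⟩ for all v ∈ S_α. -/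
noncomputable section

open MeasureTheory Set

namespace SplineMG

/-- The `j`-th piece of the uniform partition of `[0,1]` into `m` subintervals of
length `h = 1/m`; the first and last pieces are extended to `-∞` resp. `+∞`
(the spline is extended polynomially outside `[0,1]`). -/
def pieceSet (m j : ℕ) : Set ℝ :=
  (if j = 0 then Iic ((1 : ℝ) / m) else Icc ((j : ℝ) / m) (((j : ℝ) + 1) / m)) ∪
  (if j = m - 1 then Ici (((m : ℝ) - 1) / m) else ∅)

/-- `u : ℝ → ℝ` belongs to the univariate spline space `S` of degree `p` and maximal
smoothness `C^{p-1}` on the uniform partition of `(0,1)` into `m` intervals of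
length `h = 1/m`. -/
def IsSpline (m p : ℕ) (u : ℝ → ℝ) : Prop :=
  ContDiffOn ℝ (p - 1 : ℕ) u (Ioo (0 : ℝ) 1) ∧
  ∀ j < m, ∃ q : Polynomial ℝ, q.natDegree ≤ p ∧ ∀ x ∈ pieceSet m j, u x = q.eval x

/-- `u` belongs to the subspace `S₀` of `S`: all odd derivatives of order `< p`
vanish at both endpoints. -/
def IsSpline0 (m p : ℕ) (u : ℝ → ℝ) : Prop :=
  IsSpline m p u ∧
  ∀ l : ℕ, 2 * l + 1 < p →
    iteratedDeriv (2 * l + 1) u 0 = 0 ∧ iteratedDeriv (2 * l + 1) u 1 = 0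

/-- The `L²(0,1)` inner product. -/
def ip0 (u v : ℝ → ℝ) : ℝ := ∫ x in Ioo (0 : ℝ) 1, u x * v x

/-- The squared `L²(0,1)` norm `‖u‖₀²`. -/
def l2normSq (u : ℝ → ℝ) : ℝ := ∫ x in Ioo (0 : ℝ) 1, u x ^ 2

/-- The `L²(0,1)` norm `‖u‖₀`. -/
def l2norm (u : ℝ → ℝ) : ℝ := Real.sqrt (l2normSq u)

/-- The squared `H¹(0,1)` seminorm `|u|₁²`. -/
def h1semiSq (u : ℝ → ℝ) : ℝ := ∫ x in Ioo (0 : ℝ) 1, deriv u x ^ 2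

/-- The `H¹(0,1)` seminorm `|u|₁`. -/
def h1semi (u : ℝ → ℝ) : ℝ := Real.sqrt (h1semiSq u)

/-- The squared full `H¹(0,1)` norm. -/
def h1normSq (u : ℝ → ℝ) : ℝ := l2normSq u + h1semiSq u

/-- `u` belongs to `S₁`, the `L²(0,1)`-orthogonal complement of `S₀` in `S`. -/
def IsSpline1 (m p : ℕ) (u : ℝ → ℝ) : Prop :=
  IsSpline m p u ∧ ∀ v, IsSpline0 m p v → ip0 u v = 0

/-- `v = Q₀ u` is the `L²(0,1)`-orthogonal projection of `u` onto `S₀`. -/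
def IsL2Proj0 (m p : ℕ) (u v : ℝ → ℝ) : Prop :=
  IsSpline0 m p v ∧ ∀ w, IsSpline0 m p w → ip0 (u - v) w = 0

/-- The component predicate: `false ↦ S₀`, `true ↦ S₁`. -/
def IsSplineC (m p : ℕ) : Bool → (ℝ → ℝ) → Prop
  | false => IsSpline0 m p
  | true => IsSpline1 m p

/-- The tensor-product spline space `S^d = S ⊗ ⋯ ⊗ S` on `(0,1)^d`. -/
def TensorSpline (d m p : ℕ) : Submodule ℝ ((Fin d → ℝ) → ℝ) :=
  Submodule.span ℝ {u | ∃ f : Fin d → ℝ → ℝ, (∀ i, IsSpline m p (f i)) ∧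
    u = fun x => ∏ i, f i (x i)}

/-- The subspace `S_α = S_{α₁} ⊗ ⋯ ⊗ S_{α_d}` of `S^d`, for `α ∈ {0,1}^d`
(`false ↦ 0`, `true ↦ 1`). -/
def TensorSplineSub (d m p : ℕ) (α : Fin d → Bool) : Submodule ℝ ((Fin d → ℝ) → ℝ) :=
  Submodule.span ℝ {u | ∃ f : Fin d → ℝ → ℝ, (∀ i, IsSplineC m p (α i) (f i)) ∧
    u = fun x => ∏ i, f i (x i)}

/-- The open unit cube `Ω = (0,1)^d`. -/
def cube (d : ℕ) : Set (Fin d → ℝ) := Set.univ.pi fun _ => Ioo (0 : ℝ) 1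

/-- The `i`-th partial derivative. -/
def pd (d : ℕ) (i : Fin d) (u : (Fin d → ℝ) → ℝ) : (Fin d → ℝ) → ℝ :=
  fun x => deriv (fun t => u (Function.update x i t)) (x i)

/-- The `L²(Ω)` inner product on the unit cube. -/
def ipd (d : ℕ) (u v : (Fin d → ℝ) → ℝ) : ℝ := ∫ x in cube d, u x * v x

/-- The squared `L²(Ω)` norm. -/
def l2normSqD (d : ℕ) (u : (Fin d → ℝ) → ℝ) : ℝ := ∫ x in cube d, u x ^ 2

/-- The bilinear form `a(u,v) = ∫_Ω (∇u·∇v + uv) dx`. -/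
def aForm (d : ℕ) (u v : (Fin d → ℝ) → ℝ) : ℝ :=
  ∫ x in cube d, (∑ i, pd d i u x * pd d i v x) + u x * v x

/-- The squared `H¹(Ω)` seminorm. -/
def h1semiSqD (d : ℕ) (u : (Fin d → ℝ) → ℝ) : ℝ :=
  ∫ x in cube d, ∑ i, pd d i u x ^ 2

/-- The squared full `H¹(Ω)` norm. -/
def h1normSqD (d : ℕ) (u : (Fin d → ℝ) → ℝ) : ℝ := l2normSqD d u + h1semiSqD d u

/-- `v = Q_α u` is the `L²(Ω)`-orthogonal projection of `u` onto `S_α`. -/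
def IsL2ProjSub (d m p : ℕ) (α : Fin d → Bool) (u v : (Fin d → ℝ) → ℝ) : Prop :=
  v ∈ TensorSplineSub d m p α ∧ ∀ w ∈ TensorSplineSub d m p α, ipd d (u - v) w = 0

/-- The coarse tensor-product spline space `(S_c)^d` (with `m/2` knot spans of
width `2h` per direction). -/
def TensorSplineCoarse (d m p : ℕ) : Submodule ℝ ((Fin d → ℝ) → ℝ) :=
  TensorSpline d (m / 2) p

/-- `v = T_c u` is the `a(·,·)`-orthogonal (Galerkin) projection of `u` onto `(S_c)^d`. -/
def IsGalerkinCoarseProj (d m p : ℕ) (u v : (Fin d → ℝ) → ℝ) : Prop :=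
  v ∈ TensorSplineCoarse d m p ∧ ∀ w ∈ TensorSplineCoarse d m p, aForm d (u - v) w = 0

end SplineMG

namespace SplineMG

/-- Regularity data of a univariate spline on the unit interval. -/
theorem spline_reg {m p : ℕ} (hm : 1 ≤ m) {f : ℝ → ℝ} (hf : IsSpline m p f) :
    ∃ C : ℝ, AEStronglyMeasurable f (volume.restrict (Ioo (0:ℝ) 1)) ∧
      ∀ᵐ x ∂(volume.restrict (Ioo (0:ℝ) 1)),
        ‖f x‖ ≤ C ∧ ‖deriv f x‖ ≤ C ∧ DifferentiableAt ℝ f x := by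
  obtain ⟨h1, h2⟩ := hf
  choose q hq using h2
  have hb : ∀ r : Polynomial ℝ, ∃ C : ℝ, ∀ x ∈ Icc (0:ℝ) 1, ‖r.eval x‖ ≤ C := fun r =>
    isCompact_Icc.exists_bound_of_continuousOn r.continuous.continuousOn
  choose B hB using hb
  have hB0 : ∀ r, 0 ≤ B r := fun r => (norm_nonneg _).trans (hB r 0 (by simp))
  let D : ℕ → ℝ := fun j => if h : j < m then B (q j h) + B (q j h).derivative else 0
  have hD0 : ∀ j, 0 ≤ D j := by
    intro j
    simp only [D]
    split_ifs
    · exact add_nonneg (hB0 _) (hB0 _)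
    · exact le_rfl
  refine ⟨∑ j ∈ Finset.range m, D j, h1.continuousOn.aestronglyMeasurable measurableSet_Ioo, ?_⟩
  have hK : ((fun j : ℕ => (j:ℝ) / m) '' (Finset.range m : Set ℕ)).Finite :=
    (Finset.finite_toSet _).image _
  have hKae := hK.countable.ae_notMem (volume.restrict (Ioo (0:ℝ) 1))
  filter_upwards [hKae, ae_restrict_mem measurableSet_Ioo] with x hxK hx
  have hm0 : (0:ℝ) < m := by exact_mod_cast hm
  set j := ⌊x * m⌋₊ with hj
  have hxm : 0 ≤ x * m := mul_nonneg hx.1.le hm0.le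
  have hjm : j < m := by
    rw [hj, Nat.floor_lt hxm]
    nlinarith [hx.2]
  have hlo : (j:ℝ) / m < x := by
    have : (j:ℝ) / m ≤ x := by
      rw [div_le_iff₀ hm0]; exact Nat.floor_le hxm
    refine lt_of_le_of_ne this fun h => hxK ⟨j, by simpa using hjm, h⟩
  have hhi : x < ((j:ℝ) + 1) / m := by
    rw [lt_div_iff₀ hm0]; exact Nat.lt_floor_add_one _
  have hsub : Ioo ((j:ℝ) / m) (((j:ℝ) + 1) / m) ⊆ pieceSet m j := by
    intro y hy
    refine Or.inl ?_
    split_ifs with h0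
    · rw [h0] at hy
      simpa using hy.2.le
    · exact ⟨hy.1.le, hy.2.le⟩
  have hev : f =ᶠ[nhds x] fun y => (q j hjm).eval y := by
    filter_upwards [Ioo_mem_nhds hlo hhi] with y hy
    exact (hq j hjm).2 y (hsub hy)
  have hle : D j ≤ ∑ j ∈ Finset.range m, D j :=
    Finset.single_le_sum (fun i _ => hD0 i) (Finset.mem_range.2 hjm)
  have hDj : D j = B (q j hjm) + B (q j hjm).derivative := by simp [D, hjm]
  have hxI : x ∈ Icc (0:ℝ) 1 := ⟨hx.1.le, hx.2.le⟩
  refine ⟨?_, ?_, ?_⟩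
  · rw [hev.eq_of_nhds]
    linarith [hB (q j hjm) x hxI, hB0 (q j hjm).derivative]
  · rw [hev.deriv_eq, Polynomial.deriv]
    linarith [hB (q j hjm).derivative x hxI, hB0 (q j hjm)]
  · exact (q j hjm).differentiable.differentiableAt.congr_of_eventuallyEq hev

/-- Regularity of tensor-product splines. -/
theorem tensor_reg {m p : ℕ} (hm : 1 ≤ m) {α : Fin 2 → Bool} {v : (Fin 2 → ℝ) → ℝ}
    (hv : v ∈ TensorSplineSub 2 m p α) :
    MemLp v 2 (volume.restrict (cube 2)) ∧
    (∀ i, MemLp (pd 2 i v) 2 (volume.restrict (cube 2))) ∧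
    (∀ i, ∀ᵐ x ∂(volume.restrict (cube 2)),
      DifferentiableAt ℝ (fun t => v (Function.update x i t)) (x i)) := by
  unfold TensorSplineSub at hv
  induction hv using Submodule.span_induction with
  | mem v h =>
    obtain ⟨f, hf, rfl⟩ := h
    have hs : ∀ i, IsSpline m p (f i) := by
      intro i
      have := hf i
      cases h : α i <;> rw [h] at this <;> exact this.1
    choose C hC using fun i => spline_reg hm (hs i)
    have hmu : (volume.restrict (cube 2) : Measure (Fin 2 → ℝ)) =
        Measure.pi (fun _ : Fin 2 => volume.restrict (Ioo (0:ℝ) 1)) := by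
      rw [cube, volume_pi, Measure.restrict_pi_pi]
    have hqm : ∀ i : Fin 2, Measure.QuasiMeasurePreserving (fun x : Fin 2 → ℝ => x i)
        (volume.restrict (cube 2)) (volume.restrict (Ioo (0:ℝ) 1)) := by
      intro i
      rw [hmu]
      exact Measure.quasiMeasurePreserving_eval (μ := fun _ : Fin 2 => volume.restrict (Ioo (0:ℝ) 1)) i
    have hfin : IsFiniteMeasure (volume.restrict (cube 2) : Measure (Fin 2 → ℝ)) := by
      rw [hmu]; infer_instance
    have hae := fun i => (hqm i).ae (hC i).2
    have hme := fun i => (hC i).1.comp_quasiMeasurePreserving (hqm i)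
    have hmd := fun i => ((measurable_deriv (f i)).aestronglyMeasurable
      (μ := volume.restrict (Ioo (0:ℝ) 1))).comp_quasiMeasurePreserving (hqm i)
    have hbd : ∀ a b c d : ℝ, ‖a‖ ≤ c → ‖b‖ ≤ d → ‖a * b‖ ≤ c * d := by
      intro a b c d h1 h2
      rw [norm_mul]
      exact mul_le_mul h1 h2 (norm_nonneg _) ((norm_nonneg _).trans h1)
    refine ⟨?_, ?_, ?_⟩
    · simp only [Fin.prod_univ_two]
      refine MemLp.of_bound ((hme 0).mul (hme 1)) (C 0 * C 1) ?_
      filter_upwards [hae 0, hae 1] with x h0 h1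
      exact hbd _ _ _ _ h0.1 h1.1
    · intro i
      fin_cases i
      · have : pd 2 0 (fun x => ∏ i, f i (x i)) = fun x => deriv (f 0) (x 0) * f 1 (x 1) := by
          ext x
          simp [pd, Fin.prod_univ_two]
        simp only [Fin.zero_eta, Fin.mk_one]
        rw [this]
        refine MemLp.of_bound ((hmd 0).mul (hme 1)) (C 0 * C 1) ?_
        filter_upwards [hae 0, hae 1] with x h0 h1
        exact hbd _ _ _ _ h0.2.1 h1.1
      · have : pd 2 1 (fun x => ∏ i, f i (x i)) = fun x => f 0 (x 0) * deriv (f 1) (x 1) := by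
          ext x
          simp [pd, Fin.prod_univ_two]
        simp only [Fin.zero_eta, Fin.mk_one]
        rw [this]
        refine MemLp.of_bound ((hme 0).mul (hmd 1)) (C 0 * C 1) ?_
        filter_upwards [hae 0, hae 1] with x h0 h1
        exact hbd _ _ _ _ h0.1 h1.2.1
    · intro i
      filter_upwards [hae 0, hae 1] with x h0 h1
      fin_cases i
      · simpa [Fin.prod_univ_two] using h0.2.2.mul_const (f 1 (x 1))
      · simpa [Fin.prod_univ_two] using h1.2.2.const_mul (f 0 (x 0))
  | zero =>
    refine ⟨MemLp.zero, fun i => ?_, fun i => ?_⟩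
    · have : pd 2 i (0 : (Fin 2 → ℝ) → ℝ) = 0 := by ext x; simp [pd]
      rw [this]; exact MemLp.zero
    · simp
  | add u v _ _ hu hv =>
    refine ⟨hu.1.add hv.1, fun i => ?_, fun i => ?_⟩
    · refine ((hu.2.1 i).add (hv.2.1 i)).ae_eq ?_
      filter_upwards [hu.2.2 i, hv.2.2 i] with x h1 h2
      exact (deriv_fun_add h1 h2).symm
    · filter_upwards [hu.2.2 i, hv.2.2 i] with x h1 h2
      exact h1.fun_add h2
  | smul a v _ hv =>
    refine ⟨hv.1.const_smul a, fun i => ?_, fun i => ?_⟩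
    · refine ((hv.2.1 i).const_smul a).ae_eq ?_
      filter_upwards [hv.2.2 i] with x h1
      exact (deriv_fun_const_smul a h1).symm
    · filter_upwards [hv.2.2 i] with x h1
      exact h1.fun_const_smul a

theorem aForm_eq {m p : ℕ} (hm : 1 ≤ m) {α : Fin 2 → Bool} {v : (Fin 2 → ℝ) → ℝ}
    (hv : v ∈ TensorSplineSub 2 m p α) :
    aForm 2 v v = (∫ x in cube 2, pd 2 0 v x ^ 2) + (∫ x in cube 2, pd 2 1 v x ^ 2)
      + l2normSqD 2 v := by
  obtain ⟨h1, h2, -⟩ := tensor_reg hm hv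
  unfold aForm l2normSqD
  have h3 : Integrable (fun x => pd 2 0 v x ^ 2 + pd 2 1 v x ^ 2) (volume.restrict (cube 2)) :=
    (h2 0).integrable_sq.add (h2 1).integrable_sq
  rw [← integral_add (h2 0).integrable_sq (h2 1).integrable_sq,
    ← integral_add h3 h1.integrable_sq]
  refine integral_congr_ae (Filter.Eventually.of_forall fun x => ?_)
  simp [Fin.sum_univ_two, sq]

/-- there is a constant `c > 0` independent of `h = 1/m` and `p`
such that each local smoother `L_α` (with `σ = 12h⁻² = 12m²`) is spectrally bounded
from above by `c·Q_α′(A + h⁻²M⊗M)Q_α` on `S_α`, i.e. in quadratic form: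
`⟨L_α v, v⟩ ≤ c·(a(v,v) + h⁻²‖v‖₀²)` for all `v ∈ S_α`, for each `α ∈ {0,1}²`. -/
theorem local_smoother_upper_bounds_2d :
    ∃ c : ℝ, 0 < c ∧ ∀ m p : ℕ, 1 ≤ m → 1 ≤ p →
      (∀ v, v ∈ TensorSplineSub 2 m p ![false, false] →
        (1 + 2 * (12 * (m : ℝ) ^ 2)) * l2normSqD 2 v ≤
          c * (aForm 2 v v + (m : ℝ) ^ 2 * l2normSqD 2 v)) ∧
      (∀ v, v ∈ TensorSplineSub 2 m p ![false, true] →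
        (1 + 12 * (m : ℝ) ^ 2) * l2normSqD 2 v + (∫ x in cube 2, pd 2 1 v x ^ 2) ≤
          c * (aForm 2 v v + (m : ℝ) ^ 2 * l2normSqD 2 v)) ∧
      (∀ v, v ∈ TensorSplineSub 2 m p ![true, false] →
        (1 + 12 * (m : ℝ) ^ 2) * l2normSqD 2 v + (∫ x in cube 2, pd 2 0 v x ^ 2) ≤
          c * (aForm 2 v v + (m : ℝ) ^ 2 * l2normSqD 2 v)) ∧
      (∀ v, v ∈ TensorSplineSub 2 m p ![true, true] →
        l2normSqD 2 v + (∫ x in cube 2, pd 2 0 v x ^ 2) +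
            (∫ x in cube 2, pd 2 1 v x ^ 2) ≤
          c * (aForm 2 v v + (m : ℝ) ^ 2 * l2normSqD 2 v)) := by
  refine ⟨25, by norm_num, fun m p hm _ => ?_⟩
  have hm1 : (1:ℝ) ≤ (m:ℝ) ^ 2 := one_le_pow₀ (by exact_mod_cast hm)
  have key : ∀ v : (Fin 2 → ℝ) → ℝ, 0 ≤ l2normSqD 2 v ∧
      l2normSqD 2 v ≤ (m:ℝ) ^ 2 * l2normSqD 2 v ∧
      (∀ i, 0 ≤ ∫ x in cube 2, pd 2 i v x ^ 2) := by
    intro v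
    have h0 : 0 ≤ l2normSqD 2 v := integral_nonneg fun x => sq_nonneg _
    exact ⟨h0, le_mul_of_one_le_left h0 hm1, fun i => integral_nonneg fun x => sq_nonneg _⟩
  refine ⟨?_, ?_, ?_, ?_⟩ <;>
  · intro v hv
    rw [aForm_eq hm hv]
    obtain ⟨h0, h1, h2⟩ := key v
    have ha := h2 0
    have hb := h2 1
    linarith

end SplineMG
end
end

section
/- For every dimension d ≥ 1 there exist a damping parameter τ > 0 and a number of smoothing steps ν ∈ ℕ, both independent of the mesh size h and the spline degree p, such that the two-grid method on S^d with coarse space (S_c)^d and the additive subspace correction smoother L = Σ_{α∈{0,1}^d} Q_α′ L_α Q_α — where each L_α is obtained from A_α = Q_α′ A Q_α (written as a sum of d+1 tensor products of the operators K_{α_j} and M_{α_j}) by replacing every factor K_0 with σ M_0, σ = 12 h^{-2} — converges in the norm ‖·‖_A with a contraction rate q < 1 that does not depend on h or p. -/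
noncomputable section

open MeasureTheory Set

namespace SplineMG

/-- The bilinear form of the local smoother `L_α` on `S_α`, obtained from
`A_α = Q_α′AQ_α` (a sum of `d+1` tensor products of the operators `K_{α_j}` and
`M_{α_j}`) by replacing every factor `K₀` by `σM₀` with `σ = 12h⁻² = 12m²`:
`⟨L_α u, v⟩ = Σ_j (if α_j = 0 then σ·(u,v)_{L²} else (∂_j u, ∂_j v)_{L²}) + (u,v)_{L²}`. -/
def smootherForm (d m : ℕ) (α : Fin d → Bool) (u v : (Fin d → ℝ) → ℝ) : ℝ :=
  (∑ j : Fin d,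
    if α j = false then 12 * (m : ℝ) ^ 2 * ipd d u v
    else ∫ x in cube d, pd d j u x * pd d j v x) + ipd d u v

/-- One smoothing step `e ↦ e − τL⁻¹Ae` of the additive subspace correction smoother
`L = Σ_α Q_α′ L_α Q_α`, whose inverse is `L⁻¹ = Σ_α L_α⁻¹ Q_α′`: the correction is
`Σ_α w_α` where `w_α ∈ S_α` solves `⟨L_α w_α, z⟩ = a(e, z)` for all `z ∈ S_α`. -/
def SmoothStep (d m p : ℕ) (τ : ℝ) (e enext : (Fin d → ℝ) → ℝ) : Prop :=
  ∃ w : (Fin d → Bool) → (Fin d → ℝ) → ℝ,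
    (∀ α, w α ∈ TensorSplineSub d m p α ∧
      ∀ z ∈ TensorSplineSub d m p α, smootherForm d m α (w α) z = aForm d e z) ∧
    enext = e - τ • ∑ α : Fin d → Bool, w α

/-- The exact coarse-grid correction step for the error: `e ↦ e − T_c e` where `T_c`
is the Galerkin (`a(·,·)`-orthogonal) projector onto `(S_c)^d`. -/
def CoarseCorrection (d m p : ℕ) (e enext : (Fin d → ℝ) → ℝ) : Prop :=
  ∃ w : (Fin d → ℝ) → ℝ, IsGalerkinCoarseProj d m p e w ∧ enext = e - w

section
lemma bl_exists_repr {V : Type*} [AddCommGroup V] [Module ℝ V] [FiniteDimensional ℝ V]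
    (B : V →ₗ[ℝ] V →ₗ[ℝ] ℝ) (hB : ∀ x, B x x = 0 → x = 0) (φ : V →ₗ[ℝ] ℝ) :
    ∃ x, ∀ z, B x z = φ z := by
  have hinj : Function.Injective B := by
    rw [← LinearMap.ker_eq_bot, LinearMap.ker_eq_bot']
    intro x hx
    exact hB x (by rw [hx]; rfl)
  have hs : Function.Surjective (B : V →ₗ[ℝ] Module.Dual ℝ V) :=
    (LinearMap.injective_iff_surjective_of_finrank_eq_finrank
      (Subspace.dual_finrank_eq (K := ℝ) (V := V)).symm).1 hinj
  obtain ⟨x, hx⟩ := hs φ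
  exact ⟨x, fun z => by rw [hx]⟩

lemma bl_exists_proj {V : Type*} [AddCommGroup V] [Module ℝ V]
    (B : V →ₗ[ℝ] V →ₗ[ℝ] ℝ) (U : Submodule ℝ V) [FiniteDimensional ℝ U]
    (hB : ∀ x ∈ U, B x x = 0 → x = 0) (f : V) :
    ∃ s ∈ U, ∀ z ∈ U, B (f - s) z = 0 := by
  obtain ⟨x, hx⟩ := bl_exists_repr (V := U) (B.compl₁₂ U.subtype U.subtype)
    (fun x hx => by
      have := hB x x.2 (by simpa using hx)
      exact_mod_cast this) ((B f).comp U.subtype)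
  refine ⟨x, x.2, fun z hz => ?_⟩
  have := hx ⟨z, hz⟩
  simp at this
  simp [this]

lemma bl_cs {V : Type*} [AddCommGroup V] [Module ℝ V]
    (B : V →ₗ[ℝ] V →ₗ[ℝ] ℝ) (hsymm : ∀ x y, B x y = B y x) (hpos : ∀ x, 0 ≤ B x x) (x y : V) :
    (B x y) ^ 2 ≤ B x x * B y y := by
  have h := LinearMap.BilinForm.apply_mul_apply_le_of_forall_zero_le B hpos x y
  rw [hsymm y x] at h
  nlinarith [h]

/-- abstract two-grid argument -/
lemma bl_twogrid {V : Type*} [AddCommGroup V] [Module ℝ V] [FiniteDimensional ℝ V]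
    (a L : V →ₗ[ℝ] V →ₗ[ℝ] ℝ) (hasymm : ∀ x y, a x y = a y x) (hapos : ∀ x, 0 ≤ a x x)
    (hLsymm : ∀ x y, L x y = L y x) (hLpos : ∀ x, 0 ≤ L x x) (hLdef : ∀ x, L x x = 0 → x = 0)
    (τ C : ℝ) (hτ : 0 < τ) (hC : 0 < C) (hτC : τ ≤ C) (hsm : ∀ x, τ * a x x ≤ L x x)
    (c W v : V) (hW : ∀ z, L W z = a c z)
    (happ : ∃ z, a v z = 0 ∧ L (v - z) (v - z) ≤ C * a v v)
    (hv : a v v = a v (c - τ • W)) :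
    a v v ≤ (1 - τ / C) * a c c := by
  obtain ⟨Y, hY⟩ := bl_exists_repr L hLdef (a v)
  obtain ⟨z, hz0, hz⟩ := happ
  have h1 : a v v = a c (v - τ • Y) := by
    rw [hv]
    simp only [map_sub, map_smul, smul_eq_mul]
    rw [← hY W, hasymm v c, ← hW Y, hLsymm Y W]
  have h2 : a (v - τ • Y) (v - τ • Y) ≤ a v v - τ * L Y Y := by
    have e1 := hY Y
    have e2 := hsm Y
    have e3 := hasymm Y v
    simp only [map_sub, map_smul, smul_eq_mul, LinearMap.sub_apply, LinearMap.smul_apply]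
    rw [e3, ← e1]
    nlinarith
  have h3 : a v v = L Y (v - z) := by
    rw [hY]; simp [hz0]
  have h4 : a v v ≤ C * L Y Y := by
    have := bl_cs L hLsymm hLpos Y (v - z)
    rw [← h3] at this
    rcases (hapos v).eq_or_lt with h | h
    · rw [← h]; exact mul_nonneg hC.le (hLpos Y)
    · have h5 : (a v v) ^ 2 ≤ L Y Y * (C * a v v) :=
        this.trans (mul_le_mul_of_nonneg_left hz (hLpos Y))
      nlinarith
  have h5 : a (v - τ • Y) (v - τ • Y) ≤ (1 - τ / C) * a v v := by
    have : τ / C * a v v ≤ τ * L Y Y := by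
      rw [div_mul_eq_mul_div, div_le_iff₀ hC]
      nlinarith
    linarith
  have h6 := bl_cs a hasymm hapos c (v - τ • Y)
  rw [← h1] at h6
  rcases (hapos v).eq_or_lt with h | h
  · rw [← h]
    apply mul_nonneg _ (hapos c)
    rw [sub_nonneg, div_le_one hC]; exact hτC
  · have : (a v v) ^ 2 ≤ a c c * ((1 - τ / C) * a v v) :=
        h6.trans (mul_le_mul_of_nonneg_left h5 (hapos c))
    nlinarith

lemma bl_adapted_basis {V : Type*} [AddCommGroup V] [Module ℝ V] [FiniteDimensional ℝ V]
    (B : V →ₗ[ℝ] V →ₗ[ℝ] ℝ) (hsymm : ∀ x y, B x y = B y x) (hpos : ∀ x, 0 ≤ B x x)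
    (hdef : ∀ x, B x x = 0 → x = 0) (U : Submodule ℝ V) :
    ∃ (n : ℕ) (b : Module.Basis (Fin n) ℝ V) (t : Fin n → Bool),
      (∀ i j, B (b i) (b j) = if i = j then 1 else 0) ∧
      (∀ i, t i = false → b i ∈ U) ∧ (∀ i, t i = true → ∀ u ∈ U, B (b i) u = 0) := by
  let core : InnerProductSpace.Core ℝ V :=
    { inner := fun x y => B x y
      conj_inner_symm := fun x y => by simp [hsymm x y]
      re_inner_nonneg := fun x => by simpa using hpos x
      add_left := fun x y z => by simp
      smul_left := fun x y r => by simp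
      definite := fun x hx => hdef x hx }
  let : NormedAddCommGroup V := @InnerProductSpace.Core.toNormedAddCommGroup ℝ V _ _ _ core
  let : InnerProductSpace ℝ V := InnerProductSpace.ofCore core.toCore
  have hin : ∀ x y : V, inner ℝ x y = B x y := fun x y => rfl
  let b0 := stdOrthonormalBasis ℝ U
  let b1 := stdOrthonormalBasis ℝ Uᗮ
  let f : Fin (Module.finrank ℝ U) ⊕ Fin (Module.finrank ℝ Uᗮ) → V :=
    Sum.elim (fun i => (b0 i : V)) (fun i => (b1 i : V))
  have hf : Orthonormal ℝ f := by
    constructor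
    · rintro (i | i)
      · exact b0.orthonormal.1 i
      · exact b1.orthonormal.1 i
    · rintro (i | i) (j | j) hij
      · have := b0.orthonormal.2 (i := i) (j := j) (by rintro rfl; exact hij rfl)
        simpa [f] using this
      · exact (Submodule.mem_orthogonal _ _).1 (b1 j).2 _ (b0 i).2
      · exact (Submodule.mem_orthogonal' _ _).1 (b1 i).2 _ (b0 j).2
      · have := b1.orthonormal.2 (i := i) (j := j) (by rintro rfl; exact hij rfl)
        simpa [f] using this
  have hcard : Fintype.card (Fin (Module.finrank ℝ U) ⊕ Fin (Module.finrank ℝ Uᗮ))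
      = Module.finrank ℝ V := by
    simp [Submodule.finrank_add_finrank_orthogonal]
  let b := Module.Basis.mk hf.linearIndependent
    (hf.linearIndependent.span_eq_top_of_card_eq_finrank' hcard).ge
  have hb : ∀ i, b i = f i := fun i => by
    simp [b]
  let e : Fin (Module.finrank ℝ U) ⊕ Fin (Module.finrank ℝ Uᗮ) ≃ Fin _ := Fintype.equivFin _
  refine ⟨_, b.reindex e, fun i => (e.symm i).isRight, ?_, ?_, ?_⟩
  · intro i j
    have := orthonormal_iff_ite.1 hf (e.symm i) (e.symm j)
    rw [hin] at this
    simpa [hb] using this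
  · intro i hi
    rw [Module.Basis.reindex_apply, hb]
    rcases h : e.symm i with k | k
    · exact (b0 k).2
    · simp [h] at hi
  · intro i hi u hu
    rw [Module.Basis.reindex_apply, hb]
    rcases h : e.symm i with k | k
    · simp [h] at hi
    · exact (Submodule.mem_orthogonal' _ _).1 (b1 k).2 _ hu

end

section
/-- squared Euclidean norm -/
def nsq {κ : Type*} [Fintype κ] (x : κ → ℝ) : ℝ := ∑ i, x i ^ 2

lemma nsq_nonneg {κ : Type*} [Fintype κ] (x : κ → ℝ) : 0 ≤ nsq x :=
  Finset.sum_nonneg fun i _ => sq_nonneg _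

lemma nsq_add_le {κ : Type*} [Fintype κ] (x y : κ → ℝ) : nsq (x + y) ≤ 2 * nsq x + 2 * nsq y := by
  unfold nsq
  rw [Finset.mul_sum, Finset.mul_sum, ← Finset.sum_add_distrib]
  refine Finset.sum_le_sum fun i _ => ?_
  simp only [Pi.add_apply]
  nlinarith [sq_nonneg (x i - y i)]

lemma nsq_sub_le {κ : Type*} [Fintype κ] (x y : κ → ℝ) : nsq (x - y) ≤ 2 * nsq x + 2 * nsq y := by
  unfold nsq
  rw [Finset.mul_sum, Finset.mul_sum, ← Finset.sum_add_distrib]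
  refine Finset.sum_le_sum fun i _ => ?_
  simp only [Pi.sub_apply]
  nlinarith [sq_nonneg (x i + y i)]

lemma nsq_sum_le {κ σ : Type*} [Fintype κ] [Fintype σ] (x : σ → κ → ℝ) :
    nsq (∑ s, x s) ≤ Fintype.card σ * ∑ s, nsq (x s) := by
  unfold nsq
  rw [Finset.sum_comm, Finset.mul_sum]
  refine Finset.sum_le_sum fun i _ => ?_
  simp only [Finset.sum_apply]
  exact sq_sum_le_card_mul_sum_sq

/-- action of a matrix in direction `j` on an array -/
def act {d n : ℕ} (j : Fin d) (T : Matrix (Fin n) (Fin n) ℝ) :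
    ((Fin d → Fin n) → ℝ) →ₗ[ℝ] ((Fin d → Fin n) → ℝ) where
  toFun c := fun I => ∑ i, T (I j) i * c (Function.update I j i)
  map_add' c c' := by
    ext I; simp [mul_add, Finset.sum_add_distrib]
  map_smul' r c := by
    ext I; simp only [Pi.smul_apply, smul_eq_mul, RingHom.id_apply, Finset.mul_sum]
    exact Finset.sum_congr rfl fun i _ => by ring

lemma act_apply {d n : ℕ} (j : Fin d) (T : Matrix (Fin n) (Fin n) ℝ) (c : (Fin d → Fin n) → ℝ)
    (I : Fin d → Fin n) : act j T c I = ∑ i, T (I j) i * c (Function.update I j i) := rfl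

lemma act_mul {d n : ℕ} (j : Fin d) (T S : Matrix (Fin n) (Fin n) ℝ) (c : (Fin d → Fin n) → ℝ) :
    act j (T * S) c = act j T (act j S c) := by
  ext I
  simp only [act_apply, Matrix.mul_apply, Function.update_self, Function.update_idem,
    Finset.sum_mul, Finset.mul_sum]
  rw [Finset.sum_comm]
  exact Finset.sum_congr rfl fun i _ => Finset.sum_congr rfl fun k _ => by ring

lemma act_comm {d n : ℕ} {j k : Fin d} (hjk : j ≠ k) (T S : Matrix (Fin n) (Fin n) ℝ)
    (c : (Fin d → Fin n) → ℝ) :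
    act j T (act k S c) = act k S (act j T c) := by
  ext I
  simp only [act_apply, Finset.mul_sum]
  rw [Finset.sum_comm]
  refine Finset.sum_congr rfl fun i _ => Finset.sum_congr rfl fun l _ => ?_
  rw [Function.update_of_ne hjk.symm, Function.update_of_ne hjk, Function.update_comm hjk]
  ring

lemma sum_split {d n : ℕ} (j : Fin d) (F : (Fin d → Fin n) → ℝ) :
    ∑ I, F I = ∑ y : {k // k ≠ j} → Fin n, ∑ i, F ((Equiv.funSplitAt j (Fin n)).symm (i, y)) := by
  rw [← (Equiv.funSplitAt j (Fin n)).symm.sum_comp, Fintype.sum_prod_type, Finset.sum_comm]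

lemma split_update {d n : ℕ} (j : Fin d) (y : {k // k ≠ j} → Fin n) (i k : Fin n) :
    Function.update ((Equiv.funSplitAt j (Fin n)).symm (i, y)) j k
      = (Equiv.funSplitAt j (Fin n)).symm (k, y) := by
  ext l
  by_cases h : l = j
  · subst h; simp
  · simp [h]

lemma nsq_act {d n : ℕ} (j : Fin d) (T : Matrix (Fin n) (Fin n) ℝ) (c : (Fin d → Fin n) → ℝ) :
    nsq (act j T c) = ∑ y : {k // k ≠ j} → Fin n,
      nsq (T.mulVec fun i => c ((Equiv.funSplitAt j (Fin n)).symm (i, y))) := by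
  unfold nsq
  rw [sum_split j]
  refine Finset.sum_congr rfl fun y _ => Finset.sum_congr rfl fun i _ => ?_
  rw [act_apply]
  simp only [split_update, Matrix.mulVec, dotProduct]
  simp

lemma act_bound {d n : ℕ} (j : Fin d) (T S : Matrix (Fin n) (Fin n) ℝ) (C : ℝ)
    (h : ∀ x, nsq (T.mulVec x) ≤ C * nsq (S.mulVec x)) (c : (Fin d → Fin n) → ℝ) :
    nsq (act j T c) ≤ C * nsq (act j S c) := by
  rw [nsq_act, nsq_act, Finset.mul_sum]
  exact Finset.sum_le_sum fun y _ => h _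

lemma act_one {d n : ℕ} (j : Fin d) (c : (Fin d → Fin n) → ℝ) : act j 1 c = c := by
  ext I
  rw [act_apply]
  simp [Matrix.one_apply]

lemma act_sub {d n : ℕ} (j : Fin d) (T S : Matrix (Fin n) (Fin n) ℝ) (c : (Fin d → Fin n) → ℝ) :
    act j (T - S) c = act j T c - act j S c := by
  ext I
  simp [act_apply, sub_mul, Finset.sum_sub_distrib]

/-- diagonal projector -/
def dg {n : ℕ} (t : Fin n → Bool) (b : Bool) : Matrix (Fin n) (Fin n) ℝ :=
  Matrix.diagonal fun i => if t i = b then 1 else 0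

/-- restriction of an array to a component -/
def res {d n : ℕ} (t : Fin n → Bool) (α : Fin d → Bool) :
    ((Fin d → Fin n) → ℝ) →ₗ[ℝ] ((Fin d → Fin n) → ℝ) where
  toFun c := fun I => if (fun j => t (I j)) = α then c I else 0
  map_add' c c' := by
    ext I; simp only [Pi.add_apply]; split_ifs <;> simp
  map_smul' r c := by
    ext I; simp

lemma res_apply {d n : ℕ} (t : Fin n → Bool) (α : Fin d → Bool) (c : (Fin d → Fin n) → ℝ)
    (I : Fin d → Fin n) : res t α c I = if (fun j => t (I j)) = α then c I else 0 := rfl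

lemma sum_res {d n : ℕ} (t : Fin n → Bool) (c : (Fin d → Fin n) → ℝ) :
    ∑ α, res t α c = c := by
  ext I
  simp [res_apply]

lemma res_res {d n : ℕ} (t : Fin n → Bool) (α α' : Fin d → Bool) (c : (Fin d → Fin n) → ℝ) :
    res t α (res t α' c) = if α = α' then res t α c else 0 := by
  ext I
  simp only [res_apply]
  split_ifs <;> simp_all [res_apply]

lemma sum_nsq_res {d n : ℕ} (t : Fin n → Bool) (c : (Fin d → Fin n) → ℝ) :
    ∑ α, nsq (res t α c) = nsq c := by
  unfold nsq
  rw [Finset.sum_comm]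
  refine Finset.sum_congr rfl fun I _ => ?_
  simp only [res_apply]
  simp [ite_pow]

lemma act_res_le {d n : ℕ} (t : Fin n → Bool) (α : Fin d → Bool) (j : Fin d)
    (R : Matrix (Fin n) (Fin n) ℝ) (c : (Fin d → Fin n) → ℝ) :
    nsq (act j R (res t α c)) ≤ nsq (act j (R * dg t (α j)) c) := by
  classical
  unfold nsq
  refine Finset.sum_le_sum fun I _ => ?_
  have : act j R (res t α c) I =
      if (∀ k, k ≠ j → t (I k) = α k) then act j (R * dg t (α j)) c I else 0 := by
    simp only [act_apply, res_apply, dg, Matrix.mul_diagonal]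
    split_ifs with h
    · refine Finset.sum_congr rfl fun i _ => ?_
      have : ((fun k => t (Function.update I j i k)) = α) ↔ t i = α j := by
        constructor
        · intro h; rw [← h]; simp
        · intro h'
          ext k
          by_cases hk : k = j
          · subst hk; simpa using h'
          · simp [hk, h k hk]
      simp only [this]
      split_ifs <;> simp
    · refine Finset.sum_eq_zero fun i _ => ?_
      rw [if_neg, mul_zero]
      intro h'
      apply h
      intro k hk
      rw [← h']; simp [hk]
  rw [this]
  split_ifs
  · exact le_rfl
  · simpa using sq_nonneg _

/-- one-dimensional data in coordinates -/
structure OneD (M : ℝ) where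
  n : ℕ
  t : Fin n → Bool
  R : Matrix (Fin n) (Fin n) ℝ
  P : Matrix (Fin n) (Fin n) ℝ
  hM : 0 < M
  hM1 : 1 ≤ M
  f1 : ∀ x, nsq ((R * dg t false).mulVec x) ≤ 12 * M ^ 2 * nsq x
  f2 : ∀ x, nsq ((R * dg t true).mulVec x) ≤ 150 * nsq (R.mulVec x)
  f3 : ∀ x, nsq (P.mulVec x) ≤ nsq x
  f4 : ∀ x, nsq ((1 - P).mulVec x) ≤ 3 / M ^ 2 * nsq (R.mulVec x)
  f5 : ∀ x, nsq ((R * P).mulVec x) ≤ 74 * nsq (R.mulVec x)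

/-- Euclidean inner product on arrays -/
def ipA (κ : Type*) [Fintype κ] : (κ → ℝ) →ₗ[ℝ] (κ → ℝ) →ₗ[ℝ] ℝ :=
  LinearMap.mk₂ ℝ (fun c c' => ∑ I, c I * c' I)
    (fun c c' e => by simp [add_mul, Finset.sum_add_distrib])
    (fun r c e => by simp [Finset.mul_sum, mul_assoc])
    (fun c c' e => by simp [mul_add, Finset.sum_add_distrib])
    (fun r c e => by simp [Finset.mul_sum, mul_left_comm])

lemma ipA_apply {κ : Type*} [Fintype κ] (c c' : κ → ℝ) : ipA κ c c' = ∑ I, c I * c' I := rfl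

lemma ipA_self {κ : Type*} [Fintype κ] (c : κ → ℝ) : ipA κ c c = nsq c := by
  simp [ipA_apply, nsq, sq]

lemma ipA_comm {κ : Type*} [Fintype κ] (c c' : κ → ℝ) : ipA κ c c' = ipA κ c' c := by
  simp [ipA_apply, mul_comm]

/-- energy form on arrays -/
def aA {M : ℝ} (O : OneD M) (d : ℕ) :
    ((Fin d → Fin O.n) → ℝ) →ₗ[ℝ] ((Fin d → Fin O.n) → ℝ) →ₗ[ℝ] ℝ :=
  ∑ j, (ipA (Fin d → Fin O.n)).compl₁₂ (act j O.R) (act j O.R) + ipA (Fin d → Fin O.n)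

lemma aA_apply {M : ℝ} (O : OneD M) (d : ℕ) (c c') :
    aA O d c c' = ∑ j, ipA _ (act j O.R c) (act j O.R c') + ipA _ c c' := by
  simp [aA]

/-- local smoother form on arrays -/
def lA {M : ℝ} (O : OneD M) (d : ℕ) (α : Fin d → Bool) :
    ((Fin d → Fin O.n) → ℝ) →ₗ[ℝ] ((Fin d → Fin O.n) → ℝ) →ₗ[ℝ] ℝ :=
  ∑ j, (if α j = false then (12 * M ^ 2) • ipA (Fin d → Fin O.n) else
    (ipA (Fin d → Fin O.n)).compl₁₂ (act j O.R) (act j O.R)) + ipA (Fin d → Fin O.n)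

lemma lA_apply {M : ℝ} (O : OneD M) (d : ℕ) (α : Fin d → Bool) (c c') :
    lA O d α c c' = ∑ j, (if α j = false then 12 * M ^ 2 * ipA _ c c' else
      ipA _ (act j O.R c) (act j O.R c')) + ipA _ c c' := by
  simp only [lA, LinearMap.add_apply, LinearMap.sum_apply]
  congr 1
  refine Finset.sum_congr rfl fun j _ => ?_
  split_ifs <;> simp

/-- smoother form on arrays -/
def LA {M : ℝ} (O : OneD M) (d : ℕ) :
    ((Fin d → Fin O.n) → ℝ) →ₗ[ℝ] ((Fin d → Fin O.n) → ℝ) →ₗ[ℝ] ℝ :=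
  ∑ α, (lA O d α).compl₁₂ (res O.t α) (res O.t α)

lemma LA_apply {M : ℝ} (O : OneD M) (d : ℕ) (c c') :
    LA O d c c' = ∑ α, lA O d α (res O.t α c) (res O.t α c') := by
  simp [LA]

lemma aA_comm {M : ℝ} (O : OneD M) (d : ℕ) (c c') : aA O d c c' = aA O d c' c := by
  simp only [aA_apply, ipA_comm]

lemma aA_comm' {M : ℝ} (O : OneD M) (d : ℕ) (c c') : aA O d c c' = aA O d c' c := by
  rw [aA_apply, aA_apply, ipA_comm c c']
  congr 1
  exact Finset.sum_congr rfl fun j _ => ipA_comm _ _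

lemma lA_comm {M : ℝ} (O : OneD M) (d : ℕ) (α) (c c') : lA O d α c c' = lA O d α c' c := by
  rw [lA_apply, lA_apply, ipA_comm c c']
  congr 1
  refine Finset.sum_congr rfl fun j _ => ?_
  rw [ipA_comm (act j O.R c)]

lemma LA_comm {M : ℝ} (O : OneD M) (d : ℕ) (c c') : LA O d c c' = LA O d c' c := by
  rw [LA_apply, LA_apply]
  exact Finset.sum_congr rfl fun j _ => lA_comm _ _ _ _ _

lemma aA_self {M : ℝ} (O : OneD M) (d : ℕ) (c) :
    aA O d c c = ∑ j, nsq (act j O.R c) + nsq c := by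
  simp only [aA_apply, ipA_self]

lemma aA_nonneg {M : ℝ} (O : OneD M) (d : ℕ) (c) : 0 ≤ aA O d c c := by
  rw [aA_self]
  exact add_nonneg (Finset.sum_nonneg fun j _ => nsq_nonneg _) (nsq_nonneg _)

lemma lA_self {M : ℝ} (O : OneD M) (d : ℕ) (α) (c) :
    lA O d α c c = ∑ j, (if α j = false then 12 * M ^ 2 * nsq c else nsq (act j O.R c)) + nsq c := by
  simp only [lA_apply, ipA_self]

lemma lA_ge {M : ℝ} (O : OneD M) (d : ℕ) (α) (c) : nsq c ≤ lA O d α c c := by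
  rw [lA_self]
  apply le_add_of_nonneg_left
  refine Finset.sum_nonneg fun j _ => ?_
  split_ifs
  · exact mul_nonneg (by positivity) (nsq_nonneg _)
  · exact nsq_nonneg _

lemma LA_ge {M : ℝ} (O : OneD M) (d : ℕ) (c) : nsq c ≤ LA O d c c := by
  rw [LA_apply, ← sum_nsq_res O.t c]
  exact Finset.sum_le_sum fun α _ => lA_ge _ _ _ _

lemma nsq_eq_zero {κ : Type*} [Fintype κ] {c : κ → ℝ} (h : nsq c ≤ 0) : c = 0 := by
  have h0 : nsq c = 0 := le_antisymm h (nsq_nonneg _)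
  unfold nsq at h0
  rw [Finset.sum_eq_zero_iff_of_nonneg fun i _ => sq_nonneg _] at h0
  ext i
  simpa using h0 i (Finset.mem_univ i)

/-- the smoother dominates the energy -/
lemma aA_le_LA {M : ℝ} (O : OneD M) (d : ℕ) (c) :
    aA O d c c ≤ 2 ^ d * LA O d c c := by
  have key : ∀ α, aA O d (res O.t α c) (res O.t α c) ≤ lA O d α (res O.t α c) (res O.t α c) := by
    intro α
    rw [aA_self, lA_self]
    gcongr with j
    split_ifs with h
    · have h1 := act_res_le O.t α j O.R (res O.t α c)
      rw [res_res, if_pos rfl, h] at h1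
      refine h1.trans ?_
      have := act_bound j (O.R * dg O.t false) 1 (12 * M ^ 2) (by simpa using O.f1) (res O.t α c)
      rwa [act_one] at this
    · exact le_rfl
  have hcard : ((Fintype.card (Fin d → Bool) : ℕ) : ℝ) = 2 ^ d := by simp
  have h1 : aA O d c c ≤ 2 ^ d * ∑ α, aA O d (res O.t α c) (res O.t α c) := by
    have e0 := nsq_sum_le (fun α => res O.t α c)
    rw [sum_res, hcard] at e0
    have e1 : ∀ j : Fin d, nsq (act j O.R c) ≤ 2 ^ d * ∑ α, nsq (act j O.R (res O.t α c)) := by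
      intro j
      have := nsq_sum_le (fun α => act j O.R (res O.t α c))
      rwa [← map_sum, sum_res, hcard] at this
    simp only [aA_self, Finset.sum_add_distrib]
    rw [Finset.sum_comm, mul_add]
    refine add_le_add ?_ e0
    rw [Finset.mul_sum]
    exact Finset.sum_le_sum fun j _ => e1 j
  refine h1.trans ?_
  rw [LA_apply]
  gcongr with α
  exact key α

/-- successive application of `P` -/
def wl {M : ℝ} (O : OneD M) {d : ℕ} (v : (Fin d → Fin O.n) → ℝ) :
    List (Fin d) → ((Fin d → Fin O.n) → ℝ)
  | [] => v
  | j :: l => act j O.P (wl O v l)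

lemma wl_bound {d : ℕ} (l : List (Fin d)) : ∃ K : ℝ, 0 ≤ K ∧ ∀ (M : ℝ) (O : OneD M)
    (v : (Fin d → Fin O.n) → ℝ),
    nsq (v - wl O v l) ≤ K / M ^ 2 * aA O d v v ∧
    ∀ j, nsq (act j O.R (wl O v l)) ≤ K * aA O d v v := by
  have hR : ∀ (M : ℝ) (O : OneD M) (v : (Fin d → Fin O.n) → ℝ) j,
      nsq (act j O.R v) ≤ aA O d v v := by
    intro M O v j
    rw [aA_self]
    have := Finset.single_le_sum (f := fun j => nsq (act j O.R v)) (fun j _ => nsq_nonneg _)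
      (Finset.mem_univ j)
    have h2 := nsq_nonneg v
    linarith
  induction l with
  | nil =>
    refine ⟨1, zero_le_one, fun M O v => ⟨?_, fun j => ?_⟩⟩
    · have hM := O.hM
      have : nsq (v - wl O v []) = 0 := by simp [wl, nsq]
      rw [this]
      exact mul_nonneg (by positivity) (aA_nonneg _ _ _)
    · rw [one_mul]; exact hR M O v j
  | cons k l ih =>
    obtain ⟨K, hK, ih⟩ := ih
    refine ⟨2 * 3 + 74 * K, by positivity, fun M O v => ?_⟩
    obtain ⟨i1, i2⟩ := ih M O v
    have hM := O.hM
    have ha := aA_nonneg O d v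
    have hPc : ∀ c, nsq (act k O.P c) ≤ nsq c := by
      intro c
      have := act_bound k O.P 1 1 (by simpa using O.f3) c
      rwa [act_one, one_mul] at this
    refine ⟨?_, fun j => ?_⟩
    · have e1 : v - wl O v (k :: l) = act k (1 - O.P) v + act k O.P (v - wl O v l) := by
        simp only [wl, act_sub, act_one, map_sub]; abel
      rw [e1]
      refine (nsq_add_le _ _).trans ?_
      have e2 := act_bound k (1 - O.P) O.R _ O.f4 v
      have e3 := hPc (v - wl O v l)
      have e4 := hR M O v k
      have e5 : 3 / M ^ 2 * nsq (act k O.R v) ≤ 3 / M ^ 2 * aA O d v v := by gcongr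
      have e6 : (2 * 3 + 74 * K) / M ^ 2 * aA O d v v = 2 * (3 / M ^ 2 * aA O d v v) +
        2 * (K / M ^ 2 * aA O d v v) + 72 * (K / M ^ 2 * aA O d v v) := by ring
      have e7 : 0 ≤ K / M ^ 2 * aA O d v v := by positivity
      linarith
    · simp only [wl]
      have h0 : 0 ≤ K * aA O d v v := by positivity
      have e8 : nsq (act j O.R (act k O.P (wl O v l))) ≤ 74 * nsq (act j O.R (wl O v l)) := by
        by_cases hjk : j = k
        · subst hjk
          rw [← act_mul]
          exact act_bound j _ _ _ O.f5 _
        · rw [act_comm hjk]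
          have := hPc (act j O.R (wl O v l))
          have := nsq_nonneg (act j O.R (wl O v l))
          linarith
      have := i2 j
      nlinarith

lemma LA_approx (d : ℕ) : ∃ C : ℝ, 0 < C ∧ ∀ (M : ℝ) (O : OneD M) (v : (Fin d → Fin O.n) → ℝ),
    LA O d (v - wl O v (List.finRange d)) (v - wl O v (List.finRange d)) ≤ C * aA O d v v := by
  obtain ⟨K, hK, h⟩ := wl_bound (List.finRange d)
  refine ⟨d * (12 * K) + 2 ^ d * (d * (150 * (2 + 2 * K))) + K + 1, by positivity,
    fun M O v => ?_⟩
  obtain ⟨h1, h2⟩ := h M O v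
  set w := wl O v (List.finRange d)
  have hM := O.hM
  have hM1 := O.hM1
  have ha := aA_nonneg O d v
  set r := v - w with hr
  have h3 : ∀ j, nsq (act j O.R r) ≤ (2 + 2 * K) * aA O d v v := by
    intro j
    rw [hr, map_sub]
    refine (nsq_sub_le _ _).trans ?_
    have e1 := h2 j
    have e2 : nsq (act j O.R v) ≤ aA O d v v := by
      rw [aA_self]
      have := Finset.single_le_sum (f := fun j => nsq (act j O.R v)) (fun j _ => nsq_nonneg _)
        (Finset.mem_univ j)
      have h2 := nsq_nonneg v
      linarith
    linarith
  have h4 : M ^ 2 * nsq r ≤ K * aA O d v v := by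
    have : M ^ 2 * (K / M ^ 2 * aA O d v v) = K * aA O d v v := by field_simp
    rw [← this]; gcongr
  have h5 : nsq r ≤ K * aA O d v v := by
    refine le_trans ?_ h4
    exact le_mul_of_one_le_left (nsq_nonneg _) (one_le_pow₀ hM1)
  have h6 : ∀ α, lA O d α (res O.t α r) (res O.t α r) ≤
      d * (12 * M ^ 2 * nsq (res O.t α r)) + d * (150 * ((2 + 2 * K) * aA O d v v))
        + nsq (res O.t α r) := by
    intro α
    rw [lA_self]
    gcongr
    have : ∀ j ∈ Finset.univ, (if α j = false then 12 * M ^ 2 * nsq (res O.t α r)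
        else nsq (act j O.R (res O.t α r))) ≤
        12 * M ^ 2 * nsq (res O.t α r) + 150 * ((2 + 2 * K) * aA O d v v) := by
      intro j _
      have n1 := nsq_nonneg (res O.t α r)
      split_ifs with hα
      · have : 0 ≤ 150 * ((2 + 2 * K) * aA O d v v) := by positivity
        linarith
      · have e1 := act_res_le O.t α j O.R r
        rw [(by simpa using hα : α j = true)] at e1
        have e2 := act_bound j _ _ _ O.f2 r
        have e3 := h3 j
        have : 0 ≤ 12 * M ^ 2 * nsq (res O.t α r) := by positivity
        linarith
    refine (Finset.sum_le_sum this).trans ?_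
    simp [mul_add]
  rw [LA_apply]
  refine (Finset.sum_le_sum fun α _ => h6 α).trans ?_
  rw [Finset.sum_add_distrib, Finset.sum_add_distrib, sum_nsq_res, ← Finset.mul_sum,
    ← Finset.mul_sum, sum_nsq_res]
  simp only [Finset.sum_const, Finset.card_univ, Fintype.card_pi, Fintype.card_bool,
    Finset.prod_const, Fintype.card_fin, nsmul_eq_mul]
  push_cast
  have h7 : (d : ℝ) * (12 * M ^ 2 * nsq r) ≤ d * (12 * (K * aA O d v v)) := by
    rw [mul_assoc 12]; gcongr
  nlinarith

end

section
open Polynomial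

lemma poly_ii (q : ℝ[X]) (a b : ℝ) : IntervalIntegrable (fun x => q.eval x) volume a b :=
  q.continuous.intervalIntegrable a b

/-- integral of a polynomial -/
def pint (a b : ℝ) : ℝ[X] →ₗ[ℝ] ℝ where
  toFun q := ∫ x in a..b, q.eval x
  map_add' q r := by
    simp only [eval_add]
    exact intervalIntegral.integral_add (poly_ii q a b) (poly_ii r a b)
  map_smul' c q := by simp

lemma pint_apply (a b : ℝ) (q : ℝ[X]) : pint a b q = ∫ x in a..b, q.eval x := rfl

lemma pint_derivative (a b : ℝ) (q : ℝ[X]) : pint a b (derivative q) = q.eval b - q.eval a := by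
  rw [pint_apply]
  exact intervalIntegral.integral_eq_sub_of_hasDerivAt (fun x _ => q.hasDerivAt x)
    (poly_ii _ _ _)

lemma pint_sq_nonneg {a b : ℝ} (hab : a ≤ b) (q : ℝ[X]) : 0 ≤ pint a b (q * q) := by
  rw [pint_apply]
  apply intervalIntegral.integral_nonneg hab
  intro x _
  simpa using mul_self_nonneg _

lemma pint_sq_def {a b : ℝ} (hab : a < b) (q : ℝ[X]) (h : pint a b (q * q) = 0) : q = 0 := by
  by_contra hq
  have : ∃ c ∈ Icc a b, q.eval c ≠ 0 := by
    by_contra! hc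
    exact hq (Polynomial.eq_zero_of_infinite_isRoot q
      ((Icc_infinite hab).mono fun x hx => hc x hx))
  obtain ⟨c, hc, hqc⟩ := this
  have := intervalIntegral.integral_pos hab (f := fun x => (q * q).eval x)
    (q * q).continuous.continuousOn (fun x _ => by simpa using mul_self_nonneg _)
    ⟨c, hc, by simpa using mul_self_pos.2 hqc⟩
  rw [pint_apply] at h
  exact this.ne' h

lemma pint_mono_right {a x b : ℝ} (hax : a ≤ x) (hxb : x ≤ b) (q : ℝ[X]) :
    pint a x (q * q) ≤ pint a b (q * q) := by
  have : pint a b (q * q) = pint a x (q * q) + pint x b (q * q) := by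
    simp only [pint_apply]
    rw [intervalIntegral.integral_add_adjacent_intervals (poly_ii _ _ _) (poly_ii _ _ _)]
  have := pint_sq_nonneg hxb q
  linarith

lemma poly_sup {a x b : ℝ} (hax : a ≤ x) (hxb : x ≤ b) (q : ℝ[X]) :
    (q.eval x - q.eval a) ^ 2 ≤ (b - a) * pint a b (derivative q * derivative q) := by
  rw [← pint_derivative]
  have h1 : (pint a x (derivative q)) ^ 2 ≤ (x - a) * pint a x (derivative q * derivative q) := by
    rcases hax.eq_or_lt with h | h
    · subst h; simp [pint_apply]
    · set μ := pint a x (derivative q) with hμ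
      have h2 := pint_sq_nonneg hax (derivative q - C (μ / (x - a)))
      have h3 : pint a x ((derivative q - C (μ / (x - a))) * (derivative q - C (μ / (x - a)))) =
          pint a x (derivative q * derivative q) - 2 * (μ / (x - a)) * μ
            + (μ / (x - a)) ^ 2 * (x - a) := by
        have : (derivative q - C (μ / (x - a))) * (derivative q - C (μ / (x - a))) =
          derivative q * derivative q - (2 * (μ / (x - a))) • derivative q
            + ((μ / (x - a)) ^ 2) • derivative X := by
          simp only [smul_eq_C_mul, derivative_X, C_mul, C_pow]
          have : (C 2 : ℝ[X]) = 2 := rfl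
          rw [this]; ring
        rw [this]
        simp only [map_add, map_sub, map_smul, smul_eq_mul, pint_derivative, eval_X]
        rw [hμ, pint_derivative]
      rw [h3] at h2
      have h4 : 0 < x - a := by linarith
      have h5 : 2 * (μ / (x - a)) * μ - (μ / (x - a)) ^ 2 * (x - a) = μ ^ 2 / (x - a) := by
        field_simp; ring
      have h6 : μ ^ 2 / (x - a) ≤ pint a x (derivative q * derivative q) := by linarith
      rw [div_le_iff₀ h4] at h6
      linarith
  refine h1.trans ?_
  have := pint_mono_right hax hxb (derivative q)
  have := pint_sq_nonneg hax (derivative q)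
  gcongr
  linarith

lemma poly_l2 {a b : ℝ} (hab : a ≤ b) (q : ℝ[X]) (K : ℝ) (h : ∀ x ∈ Icc a b, (q.eval x) ^ 2 ≤ K) :
    pint a b (q * q) ≤ (b - a) * K := by
  have : pint a b (q * q) ≤ pint a b (C K) := by
    rw [pint_apply, pint_apply]
    apply intervalIntegral.integral_mono_on hab (poly_ii _ _ _) (poly_ii _ _ _)
    intro x hx
    have := h x hx
    simpa [sq] using this
  refine this.trans (le_of_eq ?_)
  simp [pint_apply]

lemma poly_inverse {a b : ℝ} (hab : a < b) (q : ℝ[X]) (hq : q.natDegree ≤ 1) :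
    (b - a) ^ 2 * pint a b (derivative q * derivative q) ≤ 12 * pint a b (q * q) := by
  obtain ⟨α, β, rfl⟩ : ∃ α β : ℝ, q = C α * X + C β := exists_eq_X_add_C_of_natDegree_le_one hq
  set γ := α * a + β with hγ
  have e1 : (C α * X + C β) * (C α * X + C β) =
      derivative (C (α ^ 2 / 3) * (X - C a) ^ 3 + C (α * γ) * (X - C a) ^ 2 + C (γ ^ 2) * X) := by
    apply Polynomial.funext
    intro x
    simp [derivative_pow]
    rw [hγ]; ring
  have e2 : derivative (C α * X + C β) * derivative (C α * X + C β) =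
      derivative (C (α ^ 2) * X) := by
    simp [sq]
  rw [e1, e2, pint_derivative, pint_derivative]
  simp only [eval_add, eval_mul, eval_C, eval_X, eval_pow, eval_sub]
  have h : 0 < b - a := by linarith
  have : 0 ≤ (b - a) * (α * (b - a) + 2 * γ) ^ 2 := by positivity
  nlinarith

lemma poly_antideriv (q : ℝ[X]) : ∃ A : ℝ[X], derivative A = q := by
  induction q using Polynomial.induction_on' with
  | add p q hp hq =>
    obtain ⟨A, hA⟩ := hp
    obtain ⟨A', hA'⟩ := hq
    exact ⟨A + A', by simp [hA, hA']⟩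
  | monomial n a =>
    refine ⟨monomial (n + 1) (a / (n + 1)), ?_⟩
    rw [derivative_monomial]
    have : (n : ℝ) + 1 ≠ 0 := by positivity
    simp [this]

/-- tuples of polynomials -/
abbrev HT := ℕ → ℝ[X]

/-- the L2 inner product on tuples -/
def BT (m : ℕ) : HT →ₗ[ℝ] HT →ₗ[ℝ] ℝ :=
  LinearMap.mk₂ ℝ (fun q r => ∑ j ∈ Finset.range m, pint ((j : ℝ) / m) (((j : ℝ) + 1) / m) (q j * r j))
    (fun q q' r => by simp [add_mul, Finset.sum_add_distrib])
    (fun c q r => by simp [Finset.mul_sum])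
    (fun q r r' => by simp [mul_add, Finset.sum_add_distrib])
    (fun c q r => by simp [Finset.mul_sum])

lemma BT_apply (m : ℕ) (q r : HT) : BT m q r =
    ∑ j ∈ Finset.range m, pint ((j : ℝ) / m) (((j : ℝ) + 1) / m) (q j * r j) := rfl

lemma BT_comm (m : ℕ) (q r : HT) : BT m q r = BT m r q := by
  simp only [BT_apply, mul_comm]

lemma knot_le (m j : ℕ) : (j : ℝ) / m ≤ ((j : ℝ) + 1) / m := by
  gcongr; linarith

lemma knot_lt {m : ℕ} (hm : 0 < m) (j : ℕ) : (j : ℝ) / m < ((j : ℝ) + 1) / m := by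
  gcongr; linarith

lemma BT_nonneg (m : ℕ) (q : HT) : 0 ≤ BT m q q := by
  rw [BT_apply]
  exact Finset.sum_nonneg fun j _ => pint_sq_nonneg (knot_le m j) _

lemma BT_cs (m : ℕ) (q r : HT) : (BT m q r) ^ 2 ≤ BT m q q * BT m r r :=
  bl_cs _ (BT_comm m) (BT_nonneg m) q r

/-- vanishing beyond `m` -/
def ZS (m : ℕ) : Submodule ℝ HT where
  carrier := {q | ∀ j, m ≤ j → q j = 0}
  add_mem' := fun hq hr j hj => by simp [hq j hj, hr j hj]
  zero_mem' := fun j _ => rfl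
  smul_mem' := fun c q hq j hj => by simp [hq j hj]

/-- continuity at interior knots -/
def CS (m : ℕ) : Submodule ℝ HT where
  carrier := {q | ∀ j : ℕ, j + 1 < m →
    (q j).eval (((j : ℝ) + 1) / m) = (q (j + 1)).eval (((j : ℝ) + 1) / m)}
  add_mem' := fun hq hr j hj => by simp [hq j hj, hr j hj]
  zero_mem' := fun j _ => rfl
  smul_mem' := fun c q hq j hj => by simp [hq j hj]

/-- derivative -/
def DT : HT →ₗ[ℝ] HT where
  toFun q := fun j => derivative (q j)
  map_add' q r := by ext1 j; simp
  map_smul' c q := by ext1 j; simp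

lemma DT_apply (q : HT) (j : ℕ) : DT q j = derivative (q j) := rfl

def ev0 : HT →ₗ[ℝ] ℝ where
  toFun q := (q 0).eval 0
  map_add' q r := by simp
  map_smul' c q := by simp

def ev1 (m : ℕ) : HT →ₗ[ℝ] ℝ where
  toFun q := (q (m - 1)).eval 1
  map_add' q r := by simp
  map_smul' c q := by simp

lemma ev0_apply (q : HT) : ev0 q = (q 0).eval 0 := rfl
lemma ev1_apply (m : ℕ) (q : HT) : ev1 m q = (q (m - 1)).eval 1 := rfl

def oneT (m : ℕ) : HT := fun j => if j < m then 1 else 0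

lemma BT_def {m : ℕ} {q : HT} (hq : q ∈ ZS m) (h : BT m q q = 0) : q = 0 := by
  rw [BT_apply, Finset.sum_eq_zero_iff_of_nonneg
    (fun j _ => pint_sq_nonneg (knot_le m j) _)] at h
  ext1 j
  by_cases hj : j < m
  · exact pint_sq_def (knot_lt (by omega) j) _ (h j (Finset.mem_range.2 hj))
  · exact hq j (by omega)

lemma telescope {m : ℕ} (hm : 0 < m) (F : ℕ → ℝ[X])
    (hF : ∀ j : ℕ, j + 1 < m →
      (F j).eval (((j : ℝ) + 1) / m) = (F (j + 1)).eval (((j : ℝ) + 1) / m)) :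
    ∑ j ∈ Finset.range m, ((F j).eval (((j : ℝ) + 1) / m) - (F j).eval ((j : ℝ) / m)) =
      (F (m - 1)).eval 1 - (F 0).eval 0 := by
  have key : ∀ k : ℕ, k < m →
      ∑ j ∈ Finset.range (k + 1), ((F j).eval (((j : ℝ) + 1) / m) - (F j).eval ((j : ℝ) / m)) =
      (F k).eval (((k : ℝ) + 1) / m) - (F 0).eval 0 := by
    intro k
    induction k with
    | zero => intro _; simp
    | succ k ih =>
      intro hk
      rw [Finset.sum_range_succ, ih (by omega), hF k hk]
      push_cast
      ring
  have := key (m - 1) (by omega)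
  rw [Nat.sub_add_cancel hm] at this
  rw [this]
  have h2 : (((m - 1 : ℕ) : ℝ) + 1) / m = 1 := by
    have h3 : (m : ℝ) ≠ 0 := by positivity
    rw [Nat.cast_sub hm]; field_simp; simp
  rw [h2]

lemma ibp {m : ℕ} (hm : 0 < m) {q r : HT} (hq : q ∈ CS m) (hr : r ∈ CS m) :
    BT m (DT q) r + BT m q (DT r) = ev1 m q * ev1 m r - ev0 q * ev0 r := by
  have := telescope hm (fun j => q j * r j) (fun j hj => by
    simp only [eval_mul]; rw [hq j hj, hr j hj])
  simp only [eval_mul] at this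
  rw [ev1_apply, ev1_apply, ev0_apply, ev0_apply, ← this, BT_apply, BT_apply,
    ← Finset.sum_add_distrib]
  refine Finset.sum_congr rfl fun j _ => ?_
  rw [← map_add, DT_apply, DT_apply, ← derivative_mul, pint_derivative]
  simp

lemma oneT_Z (m : ℕ) : oneT m ∈ ZS m := fun j hj => by simp [oneT, hj]
lemma oneT_C (m : ℕ) : oneT m ∈ CS m := fun j hj => by
  simp [oneT, hj, (by omega : j < m)]
lemma oneT_D (m : ℕ) : DT (oneT m) = 0 := by
  ext1 j; simp only [DT_apply, oneT]; split_ifs <;> simp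

lemma BT_one {m : ℕ} (hm : 0 < m) {q : HT} (hq : q ∈ CS m) :
    BT m (DT q) (oneT m) = ev1 m q - ev0 q := by
  have := ibp hm hq (oneT_C m)
  rw [oneT_D, map_zero, add_zero] at this
  rw [this]
  simp [ev1_apply, ev0_apply, oneT, hm, (by omega : m - 1 < m)]

lemma BT_one_one {m : ℕ} (hm : 0 < m) : BT m (oneT m) (oneT m) = 1 := by
  have h1 : BT m (oneT m) (oneT m) ≠ 0 := by
    intro h
    have := BT_def (oneT_Z m) h
    have := congrFun this 0
    simp [oneT, hm] at this
  have : (fun j => if j < m then X else 0 : HT) ∈ CS m := fun j hj => by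
    simp [hj, (by omega : j < m)]
  have h2 := BT_one hm this
  have h3 : DT (fun j => if j < m then X else 0 : HT) = oneT m := by
    ext1 j; simp only [DT_apply, oneT]; split_ifs <;> simp
  rw [h3] at h2
  rw [h2]
  simp [ev1_apply, ev0_apply, hm]

/-- antiderivative -/
lemma exists_J {m : ℕ} (hm : 0 < m) {q : HT} (hq : q ∈ ZS m) :
    ∃ r ∈ ZS m, r ∈ CS m ∧ DT r = q ∧ ev0 r = 0 := by
  choose A hA using poly_antideriv
  let cst : ℕ → ℝ := fun j => ∑ i ∈ Finset.range j,
    ((A (q i)).eval (((i : ℝ) + 1) / m) - (A (q i)).eval ((i : ℝ) / m))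
  refine ⟨fun j => if j < m then A (q j) - C ((A (q j)).eval ((j : ℝ) / m)) + C (cst j) else 0,
    ?_, ?_, ?_, ?_⟩
  · intro j hj; simp [hj]
  · intro j hj
    simp only [hj, (by omega : j < m), if_true]
    simp only [eval_add, eval_sub, eval_C, cst, Finset.sum_range_succ]
    push_cast
    ring
  · ext1 j
    simp only [DT_apply]
    split_ifs with h
    · simp [hA]
    · simp [hq j (by omega)]
  · simp [ev0_apply, hm, cst]

end

section
open Polynomial

/-- coarse tuples -/
def KS : Submodule ℝ HT where
  carrier := {q | ∀ i : ℕ, q (2 * i + 1) = q (2 * i)}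
  add_mem' := fun hq hr i => by simp [hq i, hr i]
  zero_mem' := fun i => rfl
  smul_mem' := fun c q hq i => by simp [hq i]

/-- even / odd coarse splines -/
def GS (m : ℕ) : ℕ → Bool → Submodule ℝ HT
  | 0, _ => ZS m ⊓ KS ⊓ LinearMap.ker DT
  | p + 1, b => ZS m ⊓ CS m ⊓ (if b then ⊤ else LinearMap.ker ev0 ⊓ LinearMap.ker (ev1 m)) ⊓
      (GS m p (!b)).comap DT

lemma GS_Z {m p : ℕ} {b : Bool} {q : HT} (hq : q ∈ GS m p b) : q ∈ ZS m := by
  cases p with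
  | zero => exact hq.1.1
  | succ p => exact hq.1.1.1

lemma poly_deg {q : ℝ[X]} {p : ℕ} (h : (derivative q).natDegree ≤ p) : q.natDegree ≤ p + 1 := by
  by_cases h0 : q.natDegree = 0
  · omega
  · have := degree_derivative_eq q (Nat.pos_of_ne_zero h0)
    have h2 := natDegree_eq_of_degree_eq_some this
    omega

lemma GS_deg {m p : ℕ} {b : Bool} {q : HT} (hq : q ∈ GS m p b) (j : ℕ) :
    (q j).natDegree ≤ p := by
  induction p generalizing b q with
  | zero =>
    have : derivative (q j) = 0 := congrFun (LinearMap.mem_ker.1 hq.2) j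
    simp [natDegree_eq_zero_of_derivative_eq_zero this]
  | succ p ih => exact poly_deg (ih hq.2)

lemma GS_K {m p : ℕ} (hm : m % 2 = 0) {b : Bool} {q : HT} (hq : q ∈ GS m p b) : q ∈ KS := by
  induction p generalizing b q with
  | zero => exact hq.1.2
  | succ p ih =>
    intro i
    by_cases hi : 2 * i + 1 < m
    · have h1 := ih hq.2 i
      have h2 : derivative (q (2 * i + 1) - q (2 * i)) = 0 := by
        rw [derivative_sub, sub_eq_zero]; exact h1
      obtain ⟨c, hc⟩ := natDegree_eq_zero.1 (natDegree_eq_zero_of_derivative_eq_zero h2)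
      have h3 := hq.1.1.2 (2 * i) hi
      have h4 := congrArg (eval (((2 * i : ℕ) + 1 : ℝ) / m)) hc
      rw [eval_sub, ← h3, sub_self, eval_C] at h4
      rw [h4, map_zero] at hc
      exact sub_eq_zero.1 hc.symm
    · have hZ := GS_Z hq
      rw [hZ _ (by omega), hZ _ (by omega)]

lemma one_GS {m : ℕ} (hm : m % 2 = 0) (p : ℕ) : oneT m ∈ GS m p true := by
  cases p with
  | zero =>
    refine ⟨⟨oneT_Z m, ?_⟩, LinearMap.mem_ker.2 (oneT_D m)⟩
    intro i
    simp only [oneT]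
    have : 2 * i + 1 < m ↔ 2 * i < m := by omega
    simp [this]
  | succ p =>
    refine ⟨⟨⟨oneT_Z m, oneT_C m⟩, by simp⟩, ?_⟩
    show DT (oneT m) ∈ GS m p _
    rw [oneT_D]; exact zero_mem _

/-- tuples of bounded degree -/
def FD (m p : ℕ) : Submodule ℝ HT where
  carrier := {q | q ∈ ZS m ∧ ∀ j, (q j).natDegree ≤ p}
  add_mem' := fun hq hr => ⟨add_mem hq.1 hr.1, fun j =>
    (natDegree_add_le _ _).trans (max_le (hq.2 j) (hr.2 j))⟩
  zero_mem' := ⟨zero_mem _, fun j => by simp⟩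
  smul_mem' := fun c q hq => ⟨Submodule.smul_mem _ _ hq.1, fun j =>
    (natDegree_smul_le _ _).trans (hq.2 j)⟩

instance FD_fin (m p : ℕ) : FiniteDimensional ℝ (FD m p) := by
  let f : FD m p →ₗ[ℝ] (Fin m → Fin (p + 1) → ℝ) :=
    { toFun := fun q j i => ((q : HT) j).coeff i
      map_add' := fun q r => by ext; simp
      map_smul' := fun c q => by ext; simp }
  apply FiniteDimensional.of_injective f
  rw [← LinearMap.ker_eq_bot, LinearMap.ker_eq_bot']
  intro q hq
  ext j i
  simp only [ZeroMemClass.coe_zero, Pi.zero_apply, coeff_zero]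
  by_cases hj : j < m
  · by_cases hi : i < p + 1
    · exact congrFun (congrFun hq ⟨j, hj⟩) ⟨i, hi⟩
    · apply coeff_eq_zero_of_natDegree_lt
      have := q.2.2 j
      omega
  · rw [q.2.1 j (by omega)]; simp

lemma fin_of_le_FD {m p : ℕ} {U : Submodule ℝ HT} (h : U ≤ FD m p) : FiniteDimensional ℝ U :=
  Submodule.finiteDimensional_of_le h

lemma GS_le_FD (m p : ℕ) (b : Bool) : GS m p b ≤ FD m p := fun _ hq => ⟨GS_Z hq, GS_deg hq⟩

lemma sum_range_two_mul (f : ℕ → ℝ) (n : ℕ) :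
    ∑ j ∈ Finset.range (2 * n), f j = ∑ i ∈ Finset.range n, (f (2 * i) + f (2 * i + 1)) := by
  induction n with
  | zero => simp
  | succ n ih =>
    rw [Nat.mul_succ, Finset.sum_range_succ, Finset.sum_range_succ, ih, Finset.sum_range_succ]
    ring

lemma base_approx {m : ℕ} (hm : m % 2 = 0) (hm0 : 0 < m) {u : HT} (hu : u ∈ CS m) (hZ : u ∈ ZS m)
    (b : Bool) :
    ∃ g ∈ GS m 0 b, BT m (u - g) (u - g) ≤ 3 / (m : ℝ) ^ 2 * BT m (DT u) (DT u) := by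
  obtain ⟨n, rfl⟩ : ∃ n, m = 2 * n := ⟨m / 2, by omega⟩
  set m := 2 * n with hmn
  let g : HT := fun j => if j < m then C ((u (2 * (j / 2))).eval (((2 * (j / 2) : ℕ) : ℝ) / m)) else 0
  have g0 : ∀ i, i < n → g (2 * i) = C ((u (2 * i)).eval (((2 * i : ℕ) : ℝ) / m)) := by
    intro i hi
    simp only [g, (by omega : 2 * i < m), if_true, (by omega : 2 * i / 2 = i)]
  have g1 : ∀ i, i < n → g (2 * i + 1) = C ((u (2 * i)).eval (((2 * i : ℕ) : ℝ) / m)) := by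
    intro i hi
    simp only [g, (by omega : 2 * i + 1 < m), if_true, (by omega : (2 * i + 1) / 2 = i)]
  refine ⟨g, ⟨⟨?_, ?_⟩, ?_⟩, ?_⟩
  · intro j hj; simp [g, hj]
  · intro i
    by_cases hi : i < n
    · rw [g0 i hi, g1 i hi]
    · simp only [g]; rw [if_neg (by omega), if_neg (by omega)]
  · show DT g = 0
    ext1 j
    simp only [DT_apply, g]
    split_ifs <;> simp
  · rw [BT_apply, BT_apply, hmn, sum_range_two_mul, sum_range_two_mul, Finset.mul_sum, ← hmn]
    refine Finset.sum_le_sum fun i hi => ?_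
    have hi := Finset.mem_range.1 hi
    have hmR : (0 : ℝ) < m := by exact_mod_cast hm0
    simp only [Pi.sub_apply, g0 i hi, g1 i hi, DT_apply]
    set a : ℝ := ((2 * i : ℕ) : ℝ) / m with ha
    set c : ℝ := (((2 * i : ℕ) : ℝ) + 1) / m with hc
    have hcc : ((2 * i + 1 : ℕ) : ℝ) / m = c := by rw [hc]; push_cast; ring
    rw [hcc]
    set e : ℝ := (((2 * i + 1 : ℕ) : ℝ) + 1) / m with he
    have hac : c - a = 1 / m := by rw [ha, hc]; ring
    have hce : e - c = 1 / m := by rw [he, hc]; push_cast; ring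
    have hpos : (0 : ℝ) < 1 / m := by positivity
    have hj : (u (2 * i)).eval c = (u (2 * i + 1)).eval c := hu (2 * i) (by omega)
    set A := pint a c (derivative (u (2 * i)) * derivative (u (2 * i)))
    set B := pint c e (derivative (u (2 * i + 1)) * derivative (u (2 * i + 1)))
    have hA : 0 ≤ A := pint_sq_nonneg (by linarith) _
    have hB : 0 ≤ B := pint_sq_nonneg (by linarith) _
    have p1 := poly_l2 (a := a) (b := c) (by linarith)
      (u (2 * i) - C (eval a (u (2 * i)))) ((c - a) * A) (fun x hx => by
        simpa using poly_sup hx.1 hx.2 (u (2 * i)))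
    have p2 := poly_l2 (a := c) (b := e) (by linarith)
      (u (2 * i + 1) - C (eval a (u (2 * i)))) (2 * (e - c) * B + 2 * (c - a) * A) (fun x hx => by
        have r1 := poly_sup hx.1 hx.2 (u (2 * i + 1))
        have r2 := poly_sup (a := a) (x := c) (b := c) (by linarith) le_rfl (u (2 * i))
        rw [hj] at r2
        simp only [eval_sub, eval_C]
        nlinarith [sq_nonneg ((eval x (u (2 * i + 1)) - eval c (u (2 * i + 1))) -
          (eval c (u (2 * i + 1)) - eval a (u (2 * i))))])
    rw [hac] at p1
    rw [hce, hac] at p2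
    have : 3 / (m : ℝ) ^ 2 * (A + B) = 1 / m * (1 / m * A) +
      1 / m * (2 * (1 / m) * B + 2 * (1 / m) * A) + 1 / m * (1 / m * B) := by ring
    have : 0 ≤ 1 / m * (1 / m * B) := by positivity
    linarith

lemma approx_step {m : ℕ} (hm : m % 2 = 0) (hm0 : 0 < m) (ε : ℝ) (hε : 0 ≤ ε) (p : ℕ) (b : Bool)
    (ih : ∀ u ∈ CS m, u ∈ ZS m → ((!b) = false → ev0 u = 0 ∧ ev1 m u = 0) →
      ∃ g ∈ GS m p (!b), BT m (u - g) (u - g) ≤ ε * BT m (DT u) (DT u))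
    {u : HT} (hC : u ∈ CS m) (hZ : u ∈ ZS m) (hb : b = false → ev0 u = 0 ∧ ev1 m u = 0) :
    ∃ g ∈ GS m (p + 1) b, BT m (u - g) (u - g) ≤ ε * BT m (DT u) (DT u) ∧
      BT m (DT g) (DT g) ≤ BT m (DT u) (DT u) := by
  have := fin_of_le_FD (GS_le_FD m p (!b))
  obtain ⟨s0, hs0, hs0o⟩ := bl_exists_proj (BT m) (GS m p (!b))
    (fun x hx h => BT_def (GS_Z hx) h) (DT u)
  have orth : BT m (DT u) (DT u) = BT m (DT u - s0) (DT u - s0) + BT m s0 s0 := by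
    have h1 := hs0o s0 hs0
    have h2 := BT_comm m (DT u) s0
    simp only [map_sub, LinearMap.sub_apply] at h1 ⊢
    linarith
  obtain ⟨r, hrZ, hrC, hrD, hr0⟩ := exists_J hm0 (GS_Z hs0)
  -- choose the constant
  obtain ⟨s, hsZ, hsC, hsD, hsb⟩ : ∃ s ∈ ZS m, s ∈ CS m ∧ DT s = s0 ∧
      (if b then BT m (u - s) (oneT m) = 0 else ev0 s = 0 ∧ ev1 m s = 0) := by
    cases b with
    | true =>
      refine ⟨r + (BT m (u - r) (oneT m)) • oneT m, add_mem hrZ (Submodule.smul_mem _ _ (oneT_Z m)),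
        add_mem hrC (Submodule.smul_mem _ _ (oneT_C m)), ?_, ?_⟩
      · rw [map_add, map_smul, oneT_D, smul_zero, add_zero, hrD]
      · rw [if_pos rfl, ← sub_sub, map_sub, LinearMap.sub_apply, map_smul, LinearMap.smul_apply,
          BT_one_one hm0]
        simp
    | false =>
      refine ⟨r, hrZ, hrC, hrD, ?_⟩
      simp only [Bool.false_eq_true, if_false]
      refine ⟨hr0, ?_⟩
      have h1 := hs0o (oneT m) (one_GS hm p)
      rw [map_sub, LinearMap.sub_apply, BT_one hm0 hC, ← hrD, BT_one hm0 hrC, hr0, (hb rfl).1,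
        (hb rfl).2] at h1
      linarith
  set w := u - s with hw
  have hwC : w ∈ CS m := sub_mem hC hsC
  have hwZ : w ∈ ZS m := sub_mem hZ hsZ
  obtain ⟨φ, hφZ, hφC, hφD, hφ0⟩ := exists_J hm0 hwZ
  have hφ1 : b = true → ev1 m φ = 0 := by
    rintro rfl
    have := BT_one hm0 hφC
    simp only [if_true] at hsb
    rw [hφD, hsb, hφ0] at this
    linarith
  have hIBP : BT m (DT w) φ + BT m w w = 0 := by
    have := ibp hm0 hwC hφC
    rw [hφD] at this
    rw [this, hφ0, mul_zero, sub_zero]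
    cases b with
    | true => rw [hφ1 rfl, mul_zero]
    | false =>
      simp only [Bool.false_eq_true, if_false] at hsb
      rw [hw, map_sub, hsb.2, (hb rfl).2]; simp
  obtain ⟨g, hg, hgb⟩ := ih φ hφC hφZ (fun h => ⟨hφ0, hφ1 (by simpa using h)⟩)
  have hDw : DT w = DT u - s0 := by rw [hw, map_sub, hsD]
  rw [hφD] at hgb
  have h1 : BT m w w = - BT m (DT u - s0) (φ - g) := by
    rw [hDw] at hIBP
    rw [map_sub (BT m (DT u - s0)), hs0o g hg]
    linarith
  have h2 := BT_cs m (DT u - s0) (φ - g)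
  have h3 : (BT m w w) ^ 2 ≤ BT m (DT u - s0) (DT u - s0) * (ε * BT m w w) := by
    rw [h1, neg_sq, ← h1]
    exact h2.trans (mul_le_mul_of_nonneg_left hgb (BT_nonneg _ _))
  have h4 := BT_nonneg m (DT u - s0)
  have h5 := BT_nonneg m s0
  have h6 : BT m w w ≤ ε * BT m (DT u - s0) (DT u - s0) := by
    rcases (BT_nonneg m w).eq_or_lt with h | h
    · rw [← h]; positivity
    · nlinarith
  refine ⟨s, ⟨⟨⟨hsZ, hsC⟩, ?_⟩, ?_⟩, ?_, ?_⟩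
  · cases b with
    | true => simp
    | false =>
      simp only [Bool.false_eq_true, if_false] at hsb ⊢
      exact ⟨LinearMap.mem_ker.2 hsb.1, LinearMap.mem_ker.2 hsb.2⟩
  · show DT s ∈ GS m p (!b)
    rw [hsD]; exact hs0
  · refine h6.trans ?_
    gcongr
    linarith
  · rw [hsD]; linarith

lemma approx_all {m : ℕ} (hm : m % 2 = 0) (hm0 : 0 < m) (p : ℕ) (b : Bool) :
    ∀ u ∈ CS m, u ∈ ZS m → (b = false → ev0 u = 0 ∧ ev1 m u = 0) →
      ∃ g ∈ GS m p b, BT m (u - g) (u - g) ≤ 3 / (m : ℝ) ^ 2 * BT m (DT u) (DT u) := by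
  induction p generalizing b with
  | zero => exact fun u hC hZ _ => base_approx hm hm0 hC hZ b
  | succ p ih =>
    intro u hC hZ hb
    obtain ⟨g, h1, h2, _⟩ := approx_step hm hm0 _ (by positivity) p b (ih (!b)) hC hZ hb
    exact ⟨g, h1, h2⟩

lemma approx_main {m : ℕ} (hm : m % 2 = 0) (hm0 : 0 < m) {p : ℕ} (hp : 1 ≤ p) {u : HT}
    (hC : u ∈ CS m) (hZ : u ∈ ZS m) :
    ∃ g ∈ GS m p true, BT m (u - g) (u - g) ≤ 3 / (m : ℝ) ^ 2 * BT m (DT u) (DT u) ∧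
      BT m (DT g) (DT g) ≤ BT m (DT u) (DT u) := by
  obtain ⟨p, rfl⟩ : ∃ k, p = k + 1 := ⟨p - 1, by omega⟩
  exact approx_step hm hm0 _ (by positivity) p true (approx_all hm hm0 p _) hC hZ (by simp)

/-- tuple splines -/
def ST (m p : ℕ) : Submodule ℝ HT where
  carrier := {q | q ∈ FD m p ∧ ∀ k < p, (DT ^ k) q ∈ CS m}
  add_mem' := fun hq hr => ⟨add_mem hq.1 hr.1, fun k hk => by
    rw [map_add]; exact add_mem (hq.2 k hk) (hr.2 k hk)⟩
  zero_mem' := ⟨zero_mem _, fun k _ => by rw [map_zero]; exact zero_mem _⟩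
  smul_mem' := fun c q hq => ⟨Submodule.smul_mem _ _ hq.1, fun k hk => by
    rw [map_smul]; exact Submodule.smul_mem _ _ (hq.2 k hk)⟩

/-- tuple splines with boundary conditions -/
def S0T (m p : ℕ) : Submodule ℝ HT where
  carrier := {q | q ∈ ST m p ∧ ∀ l, 2 * l + 1 < p →
    ev0 ((DT ^ (2 * l + 1)) q) = 0 ∧ ev1 m ((DT ^ (2 * l + 1)) q) = 0}
  add_mem' := fun hq hr => ⟨add_mem hq.1 hr.1, fun l hl => by
    simp only [map_add, (hq.2 l hl).1, (hq.2 l hl).2, (hr.2 l hl).1, (hr.2 l hl).2]; simp⟩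
  zero_mem' := ⟨zero_mem _, fun k _ => by simp⟩
  smul_mem' := fun c q hq => ⟨Submodule.smul_mem _ _ hq.1, fun l hl => by
    simp only [map_smul, (hq.2 l hl).1, (hq.2 l hl).2]; simp⟩

lemma GS_iter {m p : ℕ} {b : Bool} {q : HT} (hq : q ∈ GS m p b) (k : ℕ) (hk : k ≤ p) :
    (DT ^ k) q ∈ GS m (p - k) (b ^^ decide (k % 2 = 1)) := by
  induction k with
  | zero => simpa using hq
  | succ k ih =>
    have h := ih (by omega)
    obtain ⟨r, hr⟩ : ∃ r, p - k = r + 1 := ⟨p - k - 1, by omega⟩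
    rw [hr] at h
    have h2 : DT ((DT ^ k) q) ∈ GS m r _ := h.2
    rw [pow_succ', (by omega : p - (k + 1) = r)]
    have : (b ^^ decide ((k + 1) % 2 = 1)) = !(b ^^ decide (k % 2 = 1)) := by
      rcases Nat.mod_two_eq_zero_or_one k with h | h
      · have : (k + 1) % 2 = 1 := by omega
        simp [h, this]
      · have : (k + 1) % 2 = 0 := by omega
        simp [h, this]
    rw [this]
    exact h2

lemma GS_le_S0T (m p : ℕ) : GS m p true ≤ S0T m p := by
  intro q hq
  refine ⟨⟨⟨GS_Z hq, GS_deg hq⟩, fun k hk => ?_⟩, fun l hl => ?_⟩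
  · have := GS_iter hq k hk.le
    obtain ⟨r, hr⟩ : ∃ r, p - k = r + 1 := ⟨p - k - 1, by omega⟩
    rw [hr] at this
    exact this.1.1.2
  · have := GS_iter hq (2 * l + 1) hl.le
    obtain ⟨r, hr⟩ : ∃ r, p - (2 * l + 1) = r + 1 := ⟨p - (2 * l + 1) - 1, by omega⟩
    rw [hr] at this
    have h2 := this.1.2
    rw [(by omega : (2 * l + 1) % 2 = 1)] at h2
    simp at h2
    exact h2

lemma DT_pow_apply (k : ℕ) (q : HT) (j : ℕ) : (DT ^ k) q j = derivative^[k] (q j) := by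
  induction k generalizing q with
  | zero => rfl
  | succ k ih => rw [pow_succ, Function.iterate_succ_apply, Module.End.mul_apply, ih]; rfl

lemma inverse_T {m : ℕ} (hm0 : 0 < m) {p : ℕ} (hp : 1 ≤ p) {q : HT} (hq : q ∈ S0T m p) :
    BT m (DT q) (DT q) ≤ 12 * (m : ℝ) ^ 2 * BT m q q := by
  have hmR : (0 : ℝ) < m := by exact_mod_cast hm0
  have key : ∀ i k, k + 1 + i = p →
      BT m ((DT ^ (k + 1)) q) ((DT ^ (k + 1)) q) ≤
        12 * (m : ℝ) ^ 2 * BT m ((DT ^ k) q) ((DT ^ k) q) := by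
    intro i
    induction i with
    | zero =>
      intro k hk
      rw [BT_apply, BT_apply, Finset.mul_sum]
      refine Finset.sum_le_sum fun j hj => ?_
      rw [pow_succ', Module.End.mul_apply, DT_apply]
      have := poly_inverse (knot_lt hm0 j) ((DT ^ k) q j) (by
        rw [DT_pow_apply]
        have h1 := natDegree_iterate_derivative (q j) k
        have h2 := hq.1.1.2 j
        omega)
      rw [(by ring : ((j : ℝ) + 1) / m - j / m = 1 / m)] at this
      have h3 : ∀ x : ℝ, x = m ^ 2 * ((1 / m) ^ 2 * x) := fun x => by field_simp
      rw [h3 (pint _ _ (derivative _ * _))]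
      calc _ ≤ (m : ℝ) ^ 2 * (12 * pint (j / m) ((j + 1) / m) ((DT ^ k) q j * (DT ^ k) q j)) := by
            gcongr
        _ = _ := by ring
    | succ i ih =>
      intro k hk
      have h1 := ih (k + 1) (by omega)
      have hC0 := hq.1.2 k (by omega)
      have hC1 := hq.1.2 (k + 1) (by omega)
      have h2 := ibp hm0 hC0 hC1
      have e1 : DT ((DT ^ k) q) = (DT ^ (k + 1)) q := by rw [pow_succ', Module.End.mul_apply]
      have e2 : DT ((DT ^ (k + 1)) q) = (DT ^ (k + 1 + 1)) q := by
        rw [pow_succ' DT (k + 1), Module.End.mul_apply]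
      have h3 : ev1 m ((DT ^ k) q) * ev1 m ((DT ^ (k + 1)) q) -
          ev0 ((DT ^ k) q) * ev0 ((DT ^ (k + 1)) q) = 0 := by
        rcases Nat.even_or_odd' k with ⟨l, h | h⟩
        · have := hq.2 l (by omega)
          rw [← h] at this
          rw [this.1, this.2]; simp
        · have := hq.2 l (by omega)
          rw [← h] at this
          rw [this.1, this.2]; simp
      rw [h3, e1, e2] at h2
      have h4 := BT_cs m ((DT ^ k) q) ((DT ^ (k + 1 + 1)) q)
      have h5 := BT_nonneg m ((DT ^ k) q)
      rcases (BT_nonneg m ((DT ^ (k + 1)) q)).eq_or_lt with h | h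
      · rw [← h]; positivity
      · have h6 : (BT m ((DT ^ (k + 1)) q) ((DT ^ (k + 1)) q)) ^ 2 ≤
            BT m ((DT ^ k) q) ((DT ^ k) q) *
              (12 * (m : ℝ) ^ 2 * BT m ((DT ^ (k + 1)) q) ((DT ^ (k + 1)) q)) := by
          rw [(by linarith : BT m ((DT ^ (k + 1)) q) ((DT ^ (k + 1)) q) =
            - BT m ((DT ^ k) q) ((DT ^ (k + 1 + 1)) q)), neg_sq,
            ← (by linarith : BT m ((DT ^ (k + 1)) q) ((DT ^ (k + 1)) q) =
            - BT m ((DT ^ k) q) ((DT ^ (k + 1 + 1)) q))]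
          exact h4.trans (mul_le_mul_of_nonneg_left h1 h5)
        nlinarith
  have := key (p - 1) 0 (by omega)
  simpa using this

end

section
open Polynomial

open Filter Topology in
lemma mem_piece {m j : ℕ} (hj : j < m) (x : ℝ) : x ∈ pieceSet m j ↔
    (j = 0 ∨ (j : ℝ) / m ≤ x) ∧ (j = m - 1 ∨ x ≤ ((j : ℝ) + 1) / m) := by
  have hm : (0 : ℝ) < m := by exact_mod_cast (by omega : 0 < m)
  unfold pieceSet
  by_cases h0 : j = 0
  · subst h0
    by_cases h1 : 0 = m - 1
    · have : m = 1 := by omega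
      subst this
      simp
      rcases le_total x 1 with h | h
      · exact Or.inl h
      · exact Or.inr (by linarith)
    · simp [h1]
  · by_cases h1 : j = m - 1
    · have h2 : (m : ℝ) - 1 = j := by
        rw [h1, Nat.cast_sub (by omega)]; simp
      rw [if_neg h0, if_pos h1, h2]
      simp only [mem_union, mem_Icc, mem_Ici]
      tauto
    · simp [h0, h1]

/-- index of the piece -/
def idx (m : ℕ) (x : ℝ) : ℕ := min ⌊(m : ℝ) * x⌋₊ (m - 1)

lemma idx_lt {m : ℕ} (hm : 0 < m) (x : ℝ) : idx m x < m := by unfold idx; omega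

lemma idx_eq_iff {m j : ℕ} (hj : j < m) (x : ℝ) : idx m x = j ↔
    (j = 0 ∨ (j : ℝ) / m ≤ x) ∧ (j = m - 1 ∨ x < ((j : ℝ) + 1) / m) := by
  have hm : (0 : ℝ) < m := by exact_mod_cast (by omega : 0 < m)
  have h1 : ((j : ℝ) / m ≤ x) ↔ (j : ℝ) ≤ m * x := by rw [div_le_iff₀ hm, mul_comm]
  have h2 : (x < ((j : ℝ) + 1) / m) ↔ (m : ℝ) * x < ((j + 1 : ℕ) : ℝ) := by
    rw [lt_div_iff₀ hm, mul_comm]; push_cast; rfl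
  rw [h1, h2, ← Nat.floor_lt' (by omega)]
  have h3 : j ≠ 0 → ((j : ℝ) ≤ m * x ↔ j ≤ ⌊(m : ℝ) * x⌋₊) := fun h => (Nat.le_floor_iff' h).symm
  unfold idx
  by_cases h0 : j = 0
  · simp only [h0, true_or, true_and]; omega
  · rw [h3 h0]; omega

lemma idx_self {m : ℕ} (hm : 0 < m) (x : ℝ) : x ∈ pieceSet m (idx m x) := by
  have h := (idx_eq_iff (idx_lt hm x) x).1 rfl
  rw [mem_piece (idx_lt hm x)]
  exact ⟨h.1, h.2.imp id le_of_lt⟩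

/-- piecewise polynomial function -/
def pw (m : ℕ) (q : HT) (x : ℝ) : ℝ := (q (idx m x)).eval x

lemma pw_add (m : ℕ) (q r : HT) : pw m (q + r) = pw m q + pw m r := by
  ext x; simp [pw]
lemma pw_smul (m : ℕ) (c : ℝ) (q : HT) : pw m (c • q) = c • pw m q := by
  ext x; simp [pw]
lemma pw_mul (m : ℕ) (q r : HT) (x : ℝ) : pw m (fun j => q j * r j) x = pw m q x * pw m r x := by
  simp [pw]

lemma pw_of_mem {m : ℕ} {q : HT} (hq : q ∈ CS m) {j : ℕ} (hj : j < m) {x : ℝ}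
    (hx : x ∈ pieceSet m j) : pw m q x = (q j).eval x := by
  have hm : (0 : ℝ) < m := by exact_mod_cast (by omega : 0 < m)
  rw [mem_piece hj] at hx
  by_cases h : j = m - 1 ∨ x < ((j : ℝ) + 1) / m
  · rw [pw, (idx_eq_iff hj x).2 ⟨hx.1, h⟩]
  · push Not at h
    have hx2 : x = ((j : ℝ) + 1) / m := le_antisymm (hx.2.resolve_left h.1) h.2
    have : idx m x = j + 1 := by
      rw [idx_eq_iff (by omega)]
      refine ⟨Or.inr ?_, Or.inr ?_⟩
      · rw [hx2]; push_cast; rfl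
      · rw [hx2]; push_cast; gcongr; linarith
    rw [pw, this, hx2]
    exact (hq j (by omega)).symm

open Filter Topology in
lemma loc {m : ℕ} (hm : 0 < m) (x : ℝ) : ∃ j j', j < m ∧ j' < m ∧
    (∀ᶠ y in 𝓝[≥] x, idx m y = j) ∧ (∀ᶠ y in 𝓝[<] x, idx m y = j') ∧
    (j' = j ∨ (j' + 1 = j ∧ x = (j : ℝ) / m)) := by
  have hmR : (0 : ℝ) < m := by exact_mod_cast hm
  have hj := idx_lt hm x
  have h := (idx_eq_iff hj x).1 rfl
  set j := idx m x with hjd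
  have up : ∀ᶠ y in 𝓝 x, (j = m - 1 ∨ y < ((j : ℝ) + 1) / m) := by
    rcases h.2 with h2 | h2
    · exact Eventually.of_forall fun y => Or.inl h2
    · filter_upwards [Iio_mem_nhds h2] with y hy using Or.inr hy
  have hR : ∀ᶠ y in 𝓝[≥] x, idx m y = j := by
    filter_upwards [nhdsWithin_le_nhds up, self_mem_nhdsWithin] with y hy hy2
    rw [idx_eq_iff hj]
    exact ⟨h.1.imp id (fun h => le_trans h hy2), hy⟩
  by_cases hc : j = 0 ∨ (j : ℝ) / m < x
  · refine ⟨j, j, hj, hj, hR, ?_, Or.inl rfl⟩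
    have dn : ∀ᶠ y in 𝓝 x, (j = 0 ∨ (j : ℝ) / m ≤ y) := by
      rcases hc with h2 | h2
      · exact Eventually.of_forall fun y => Or.inl h2
      · filter_upwards [Ioi_mem_nhds h2] with y hy using Or.inr (le_of_lt hy)
    filter_upwards [nhdsWithin_le_nhds up, nhdsWithin_le_nhds dn] with y hy hy2
    rw [idx_eq_iff hj]
    exact ⟨hy2, hy⟩
  · push Not at hc
    have hx : x = (j : ℝ) / m := le_antisymm hc.2 (h.1.resolve_left hc.1)
    obtain ⟨i, hi⟩ : ∃ i, j = i + 1 := ⟨j - 1, by omega⟩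
    refine ⟨j, i, hj, by omega, hR, ?_, Or.inr ⟨hi.symm, hx⟩⟩
    have : (i : ℝ) / m < x := by rw [hx, hi]; push_cast; gcongr; linarith
    filter_upwards [nhdsWithin_le_nhds (Ioi_mem_nhds this), self_mem_nhdsWithin] with y hy hy2
    rw [idx_eq_iff (by omega)]
    refine ⟨Or.inr (le_of_lt hy), Or.inr ?_⟩
    have : y < x := hy2
    rw [hx, hi] at this
    push_cast at this
    exact this

open Filter Topology in
lemma pw_loc {m : ℕ} (hm : 0 < m) {q : HT} (hq : q ∈ CS m) (x : ℝ) : ∃ j j', j < m ∧ j' < m ∧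
    (pw m q =ᶠ[𝓝[≥] x] fun y => (q j).eval y) ∧ (pw m q =ᶠ[𝓝[≤] x] fun y => (q j').eval y) ∧
    pw m q x = (q j).eval x ∧ pw m q x = (q j').eval x ∧ pw m (DT q) x = (DT q j).eval x ∧
    (DT q ∈ CS m → pw m (DT q) x = (DT q j').eval x) := by
  obtain ⟨j, j', hj, hj', hR, hL, hc⟩ := loc hm x
  have hx : idx m x = j := hR.self_of_nhdsWithin (le_refl x)
  have match' : ∀ r ∈ CS m, pw m r x = (r j').eval x := by
    intro r hr
    rw [pw, hx]
    rcases hc with h | ⟨h, hxj⟩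
    · rw [h]
    · have := hr j' (by omega)
      have e : x = ((j' : ℝ) + 1) / m := by rw [hxj, ← h]; push_cast; rfl
      rw [← e, h] at this
      exact this.symm
  refine ⟨j, j', hj, hj', ?_, ?_, by rw [pw, hx], match' q hq, by rw [pw, hx], match' _⟩
  · filter_upwards [hR] with y hy
    rw [pw, hy]
  · have : ∀ᶠ y in 𝓝[<] x, pw m q y = (q j').eval y := by
      filter_upwards [hL] with y hy
      rw [pw, hy]
    rw [← Iio_insert, EventuallyEq, nhdsWithin_insert, eventually_sup]
    exact ⟨by simpa using match' q hq, this⟩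

open Filter Topology in
lemma pw_continuous {m : ℕ} (hm : 0 < m) {q : HT} (hq : q ∈ CS m) : Continuous (pw m q) := by
  rw [continuous_iff_continuousAt]
  intro x
  obtain ⟨j, j', hj, hj', hR, hL, hxj, hxj', -, -⟩ := pw_loc hm hq x
  rw [continuousAt_iff_continuous_left_right]
  exact ⟨((q j').continuous.continuousWithinAt).congr_of_eventuallyEq hL hxj',
    ((q j).continuous.continuousWithinAt).congr_of_eventuallyEq hR hxj⟩

open Filter Topology in
lemma pw_hasDerivAt {m : ℕ} (hm : 0 < m) {q : HT} (hq : q ∈ CS m) (hD : DT q ∈ CS m) (x : ℝ) :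
    HasDerivAt (pw m q) (pw m (DT q) x) x := by
  obtain ⟨j, j', hj, hj', hR, hL, hxj, hxj', hd, hd'⟩ := pw_loc hm hq x
  have h1 : HasDerivWithinAt (pw m q) (pw m (DT q) x) (Ici x) x := by
    rw [hd]
    exact ((q j).hasDerivAt x).hasDerivWithinAt.congr_of_eventuallyEq hR hxj
  have h2 : HasDerivWithinAt (pw m q) (pw m (DT q) x) (Iic x) x := by
    rw [hd' hD]
    exact ((q j').hasDerivAt x).hasDerivWithinAt.congr_of_eventuallyEq hL hxj'
  have := h2.union h1
  rwa [Iic_union_Ici, hasDerivWithinAt_univ] at this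

open Filter Topology in
lemma pw_hasDerivAt_off {m : ℕ} (hm : 0 < m) {q : HT} {x : ℝ}
    (hx : ∀ j < m, x ≠ (j : ℝ) / m) : HasDerivAt (pw m q) (pw m (DT q) x) x := by
  obtain ⟨j, j', hj, hj', hR, hL, hc⟩ := loc hm x
  have hxj : idx m x = j := hR.self_of_nhdsWithin (le_refl x)
  have hc : j' = j := hc.resolve_right (fun h => hx j hj h.2)
  subst hc
  have : ∀ᶠ y in 𝓝 x, idx m y = j' := by
    rw [← nhdsLT_sup_nhdsGE, eventually_sup]
    exact ⟨hL, hR⟩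
  have e : pw m q =ᶠ[𝓝 x] fun y => (q j').eval y := by
    filter_upwards [this] with y hy
    rw [pw, hy]
  rw [e.hasDerivAt_iff]
  have : pw m (DT q) x = (DT q j').eval x := by rw [pw, hxj]
  rw [this]
  exact (q j').hasDerivAt x

lemma pw_contDiff {m : ℕ} (hm : 0 < m) (k : ℕ) {q : HT} (hq : ∀ i ≤ k, (DT ^ i) q ∈ CS m) :
    ContDiff ℝ k (pw m q) := by
  induction k generalizing q with
  | zero => exact contDiff_zero.2 (pw_continuous hm (hq 0 le_rfl))
  | succ k ih =>
    have h0 : q ∈ CS m := hq 0 (by omega)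
    have h1 : DT q ∈ CS m := by simpa using hq 1 (by omega)
    rw [Nat.cast_succ, contDiff_succ_iff_deriv]
    refine ⟨fun x => (pw_hasDerivAt hm h0 h1 x).differentiableAt, by simp, ?_⟩
    have : deriv (pw m q) = pw m (DT q) := funext fun x => (pw_hasDerivAt hm h0 h1 x).deriv
    rw [this]
    apply ih
    intro i hi
    have := hq (i + 1) (by omega)
    rwa [pow_succ, Module.End.mul_apply] at this

lemma pw_isSpline {m p : ℕ} (hm : 0 < m) (hp : 1 ≤ p) {q : HT} (hq : q ∈ ST m p) :
    IsSpline m p (pw m q) := by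
  refine ⟨(pw_contDiff hm (p - 1) fun i hi => hq.2 i (by omega)).contDiffOn, fun j hj => ?_⟩
  exact ⟨q j, hq.1.2 j, fun x hx => pw_of_mem (hq.2 0 (by omega)) hj hx⟩

lemma pw_isSpline_coarse {m p : ℕ} (hm2 : m % 2 = 0) (hm : 0 < m) (hp : 1 ≤ p) {q : HT}
    (hq : q ∈ ST m p) (hK : q ∈ KS) : IsSpline (m / 2) p (pw m q) := by
  refine ⟨(pw_contDiff hm (p - 1) fun i hi => hq.2 i (by omega)).contDiffOn, fun j hj => ?_⟩
  refine ⟨q (2 * j), hq.1.2 _, fun x hx => ?_⟩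
  have hC : q ∈ CS m := hq.2 0 (by omega)
  obtain ⟨n, rfl⟩ : ∃ n, m = 2 * n := ⟨m / 2, by omega⟩
  rw [Nat.mul_div_cancel_left _ (by omega)] at hj hx
  have hn : (0 : ℝ) < n := by exact_mod_cast (by omega : 0 < n)
  rw [mem_piece hj] at hx
  have e1 : ((2 * j : ℕ) : ℝ) / ((2 * n : ℕ) : ℝ) = j / n := by push_cast; field_simp
  have e2 : (((2 * j + 1 : ℕ) : ℝ) + 1) / ((2 * n : ℕ) : ℝ) = (j + 1) / n := by
    push_cast; field_simp; ring
  by_cases h : x ≤ (((2 * j : ℕ) : ℝ) + 1) / ((2 * n : ℕ) : ℝ)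
  · apply pw_of_mem hC (by omega)
    rw [mem_piece (by omega), e1]
    exact ⟨hx.1.imp (fun h => by omega) id, Or.inr h⟩
  · rw [← hK j]
    apply pw_of_mem hC (by omega)
    rw [mem_piece (by omega), e2]
    refine ⟨Or.inr ?_, hx.2.imp (fun h => by omega) id⟩
    push_cast at h ⊢
    linarith

lemma isSpline_of_coarse {m p : ℕ} (hm2 : m % 2 = 0) {u : ℝ → ℝ}
    (hu : IsSpline (m / 2) p u) : IsSpline m p u := by
  refine ⟨hu.1, fun j hj => ?_⟩
  obtain ⟨n, rfl⟩ : ∃ n, m = 2 * n := ⟨m / 2, by omega⟩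
  rw [Nat.mul_div_cancel_left _ (by omega)] at hu
  obtain ⟨q, hq, h⟩ := hu.2 (j / 2) (by omega)
  refine ⟨q, hq, fun x hx => h x ?_⟩
  have hn : (0 : ℝ) < n := by exact_mod_cast (by omega : 0 < n)
  rw [mem_piece hj] at hx
  rw [mem_piece (by omega)]
  have h1 : (2 * (j / 2 : ℕ) : ℝ) ≤ j := by exact_mod_cast (by omega : 2 * (j / 2) ≤ j)
  have h2 : (j : ℝ) + 1 ≤ 2 * (j / 2 : ℕ) + 2 := by
    exact_mod_cast (by omega : j + 1 ≤ 2 * (j / 2) + 2)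
  have hn2 : (0 : ℝ) < 2 * n := by positivity
  push_cast at hx
  refine ⟨hx.1.imp (fun h => by omega) fun h => ?_, hx.2.imp (fun h => by omega) fun h => ?_⟩
  · rw [div_le_iff₀ hn2] at h
    rw [div_le_iff₀ hn]; linarith
  · rw [le_div_iff₀ hn2] at h
    rw [le_div_iff₀ hn]; linarith

end

section
open Polynomial

lemma iter_poly (k : ℕ) (q : ℝ[X]) :
    iteratedDeriv k (fun x => q.eval x) = fun x => (derivative^[k] q).eval x := by
  induction k generalizing q with
  | zero => ext x; simp
  | succ k ih =>
    rw [iteratedDeriv_succ', Function.iterate_succ_apply, ← ih]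
    congr 1
    ext x
    exact Polynomial.deriv q

open Filter Topology in
lemma isSpline_exists {m p : ℕ} (hm : 0 < m) (hp : 1 ≤ p) {u : ℝ → ℝ} (hu : IsSpline m p u) :
    ∃ q ∈ ST m p, u = pw m q := by
  have hmR : (0 : ℝ) < m := by exact_mod_cast hm
  choose qs hqd hqe using hu.2
  let q : HT := fun j => if h : j < m then qs j h else 0
  have qj : ∀ j (h : j < m), q j = qs j h := fun j h => by simp only [q]; rw [dif_pos h]
  have he : ∀ j (h : j < m), ∀ x ∈ pieceSet m j, u x = (q j).eval x := by
    intro j h x hx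
    rw [qj j h]; exact hqe j h x hx
  refine ⟨q, ⟨⟨fun j hj => by simp only [q]; rw [dif_neg (by omega)], fun j => ?_⟩, ?_⟩, ?_⟩
  · by_cases h : j < m
    · rw [qj j h]; exact hqd j h
    · simp only [q]; rw [dif_neg h]; simp
  · intro k hk j hj
    rw [DT_pow_apply, DT_pow_apply]
    set x0 : ℝ := ((j : ℝ) + 1) / m with hx0
    have hx0m : x0 ∈ Ioo (0 : ℝ) 1 := by
      refine ⟨by positivity, ?_⟩
      rw [hx0, div_lt_one hmR]; exact_mod_cast hj
    have hcont : ContinuousAt (iteratedDerivWithin k u (Ioo 0 1)) x0 :=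
      (hu.1.continuousOn_iteratedDerivWithin (m := k) (by exact_mod_cast (by omega : k ≤ p - 1))
        isOpen_Ioo.uniqueDiffOn).continuousAt (isOpen_Ioo.mem_nhds hx0m)
    have loc1 : ∀ i, i < m → ∀ y ∈ Ioo ((i : ℝ) / m) (((i : ℝ) + 1) / m), y ∈ Ioo (0 : ℝ) 1 →
        iteratedDerivWithin k u (Ioo 0 1) y = (derivative^[k] (q i)).eval y := by
      intro i hi y hy hy1
      rw [iteratedDerivWithin_of_isOpen isOpen_Ioo hy1]
      have : u =ᶠ[𝓝 y] fun x => (q i).eval x := by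
        filter_upwards [isOpen_Ioo.mem_nhds hy] with z hz
        exact he i hi z ((mem_piece hi z).2 ⟨Or.inr hz.1.le, Or.inr hz.2.le⟩)
      rw [this.iteratedDeriv_eq, iter_poly]
    have key : ∀ (l : Filter ℝ) [l.NeBot], l ≤ 𝓝 x0 → ∀ r : ℝ[X],
        (∀ᶠ y in l, iteratedDerivWithin k u (Ioo 0 1) y = r.eval y) →
        r.eval x0 = iteratedDerivWithin k u (Ioo 0 1) x0 := by
      intro l _ hl r hr
      have t1 : Tendsto (fun y => r.eval y) l (𝓝 (r.eval x0)) := (r.continuous.tendsto x0).mono_left hl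
      have t2 : Tendsto (iteratedDerivWithin k u (Ioo 0 1)) l
        (𝓝 (iteratedDerivWithin k u (Ioo 0 1) x0)) := hcont.tendsto.mono_left hl
      exact tendsto_nhds_unique t1 (t2.congr' hr)
    have hin : ∀ᶠ y in 𝓝 x0, y ∈ Ioo (0 : ℝ) 1 := isOpen_Ioo.mem_nhds hx0m
    have k1 := key (𝓝[<] x0) nhdsWithin_le_nhds (derivative^[k] (q j)) (by
      have h : (j : ℝ) / m < x0 := knot_lt hm j
      filter_upwards [nhdsWithin_le_nhds (Ioi_mem_nhds h), nhdsWithin_le_nhds hin,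
        self_mem_nhdsWithin] with y hy hy1 hy2
      exact loc1 j (by omega) y ⟨hy, hy2⟩ hy1)
    have k2 := key (𝓝[>] x0) nhdsWithin_le_nhds (derivative^[k] (q (j + 1))) (by
      have h0 : ((j + 1 : ℕ) : ℝ) / m = x0 := by push_cast; rfl
      have h : x0 < (((j + 1 : ℕ) : ℝ) + 1) / m := by rw [← h0]; exact knot_lt hm (j + 1)
      filter_upwards [nhdsWithin_le_nhds (Iio_mem_nhds h), nhdsWithin_le_nhds hin,
        self_mem_nhdsWithin] with y hy hy1 hy2
      exact loc1 (j + 1) (by omega) y ⟨by rw [h0]; exact hy2, hy⟩ hy1)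
    rw [k1, k2]
  · ext x
    rw [pw]
    exact he _ (idx_lt hm x) x (idx_self hm x)

open Filter Topology in
lemma pw_iter0 {m : ℕ} (hm : 0 < m) (k : ℕ) (q : HT) :
    iteratedDeriv k (pw m q) 0 = ev0 ((DT ^ k) q) := by
  have hmR : (0 : ℝ) < m := by exact_mod_cast hm
  have : pw m q =ᶠ[𝓝 0] fun x => (q 0).eval x := by
    have h : (0 : ℝ) < 1 / m := by positivity
    filter_upwards [Iio_mem_nhds h] with y hy
    rw [pw, (idx_eq_iff hm y).2 ⟨Or.inl rfl, Or.inr (by simpa using hy)⟩]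
  rw [this.iteratedDeriv_eq, iter_poly, ev0_apply, DT_pow_apply]

open Filter Topology in
lemma pw_iter1 {m : ℕ} (hm : 0 < m) (k : ℕ) (q : HT) :
    iteratedDeriv k (pw m q) 1 = ev1 m ((DT ^ k) q) := by
  have hmR : (0 : ℝ) < m := by exact_mod_cast hm
  have : pw m q =ᶠ[𝓝 1] fun x => (q (m - 1)).eval x := by
    have h : ((m - 1 : ℕ) : ℝ) / m < 1 := by
      rw [div_lt_one hmR]; exact_mod_cast (by omega : m - 1 < m)
    filter_upwards [Ioi_mem_nhds h] with y hy
    rw [pw, (idx_eq_iff (by omega) y).2 ⟨Or.inr (le_of_lt hy), Or.inl rfl⟩]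
  rw [this.iteratedDeriv_eq, iter_poly, ev1_apply, DT_pow_apply]

lemma pw_isSpline0 {m p : ℕ} (hm : 0 < m) (hp : 1 ≤ p) {q : HT} (hq : q ∈ S0T m p) :
    IsSpline0 m p (pw m q) := by
  refine ⟨pw_isSpline hm hp hq.1, fun l hl => ?_⟩
  rw [pw_iter0 hm, pw_iter1 hm]
  exact hq.2 l hl

lemma isSpline0_exists {m p : ℕ} (hm : 0 < m) (hp : 1 ≤ p) {u : ℝ → ℝ} (hu : IsSpline0 m p u) :
    ∃ q ∈ S0T m p, u = pw m q := by
  obtain ⟨q, hq, rfl⟩ := isSpline_exists hm hp hu.1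
  refine ⟨q, ⟨hq, fun l hl => ?_⟩, rfl⟩
  have := hu.2 l hl
  rwa [pw_iter0 hm, pw_iter1 hm] at this

lemma pw_ii {m : ℕ} (hm : 0 < m) (s : HT) (j : ℕ) (hj : j < m) :
    EqOn (fun x => (s j).eval x) (pw m s) (Ioo ((j : ℝ) / m) (((j : ℝ) + 1) / m)) := by
  intro x hx
  simp only [pw]
  rw [(idx_eq_iff hj x).2 ⟨Or.inr hx.1.le, Or.inr hx.2⟩]

lemma pw_intervalIntegrable {m : ℕ} (hm : 0 < m) (s : HT) (j : ℕ) (hj : j < m) :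
    IntervalIntegrable (pw m s) volume ((j : ℝ) / m) (((j + 1 : ℕ) : ℝ) / m) := by
  have := poly_ii (s j) ((j : ℝ) / m) (((j : ℝ) + 1) / m)
  rw [Nat.cast_succ]
  apply this.congr_uIoo
  rw [uIoo_of_le (knot_le m j)]
  exact pw_ii hm s j hj

lemma pw_integrableOn {m : ℕ} (hm : 0 < m) (s : HT) : IntegrableOn (pw m s) (Ioo (0 : ℝ) 1) := by
  have hmR : (0 : ℝ) < m := by exact_mod_cast hm
  have := IntervalIntegrable.trans_iterate (a := fun j : ℕ => (j : ℝ) / m)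
    (fun k hk => pw_intervalIntegrable hm s k hk)
  simp only [Nat.cast_zero, zero_div, div_self hmR.ne'] at this
  rw [intervalIntegrable_iff_integrableOn_Ioo_of_le zero_le_one] at this
  exact this

lemma pw_integral {m : ℕ} (hm : 0 < m) (s : HT) : ∫ x in Ioo (0 : ℝ) 1, pw m s x =
    ∑ j ∈ Finset.range m, pint ((j : ℝ) / m) (((j : ℝ) + 1) / m) (s j) := by
  have hmR : (0 : ℝ) < m := by exact_mod_cast hm
  have := intervalIntegral.sum_integral_adjacent_intervals (a := fun j : ℕ => (j : ℝ) / m)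
    (fun k hk => pw_intervalIntegrable hm s k hk)
  simp only [Nat.cast_zero, zero_div, div_self hmR.ne'] at this
  rw [← integral_Ioc_eq_integral_Ioo, ← intervalIntegral.integral_of_le zero_le_one, ← this]
  refine Finset.sum_congr rfl fun j hj => ?_
  rw [pint_apply, Nat.cast_succ]
  symm
  apply intervalIntegral.integral_congr_uIoo
  rw [uIoo_of_le (knot_le m j)]
  exact pw_ii hm s j (Finset.mem_range.1 hj)

lemma pw_ip {m : ℕ} (hm : 0 < m) (q r : HT) :
    ∫ x in Ioo (0 : ℝ) 1, pw m q x * pw m r x = BT m q r := by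
  simp only [← pw_mul]
  rw [pw_integral hm, BT_apply]

lemma pw_mul_integrable {m : ℕ} (hm : 0 < m) (q r : HT) :
    IntegrableOn (fun x => pw m q x * pw m r x) (Ioo (0 : ℝ) 1) := by
  simp only [← pw_mul]
  exact pw_integrableOn hm _

end

section
open Polynomial

/-- linear combinations -/
def lc {n : ℕ} (b : Fin n → HT) : (Fin n → ℝ) →ₗ[ℝ] HT where
  toFun x := ∑ i, x i • b i
  map_add' x y := by simp [add_smul, Finset.sum_add_distrib]
  map_smul' r x := by simp [Finset.smul_sum, mul_smul]

lemma lc_apply {n : ℕ} (b : Fin n → HT) (x) : lc b x = ∑ i, x i • b i := rfl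

lemma lc_form {n : ℕ} (b : Fin n → HT) (B : HT →ₗ[ℝ] HT →ₗ[ℝ] ℝ) (x y : Fin n → ℝ) :
    B (lc b x) (lc b y) = ∑ i, ∑ k, x i * y k * B (b i) (b k) := by
  simp only [lc_apply, map_sum, LinearMap.sum_apply, map_smul, LinearMap.smul_apply, smul_eq_mul]
  simp only [Finset.mul_sum]
  rw [Finset.sum_comm]
  refine Finset.sum_congr rfl fun i _ => ?_
  refine Finset.sum_congr rfl fun k _ => ?_
  ring

open scoped MatrixOrder ComplexOrder in
lemma psd_factor {n : ℕ} (K : Matrix (Fin n) (Fin n) ℝ) (h1 : ∀ i k, K i k = K k i)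
    (h2 : ∀ x : Fin n → ℝ, 0 ≤ ∑ i, ∑ k, x i * x k * K i k) :
    ∃ R : Matrix (Fin n) (Fin n) ℝ, ∀ i k, K i k = ∑ l, R l i * R l k := by
  have : K.PosSemidef := by
    apply Matrix.PosSemidef.of_dotProduct_mulVec_nonneg
    · ext i k; simp [h1 k i]
    · intro x
      have := h2 x
      simp only [dotProduct, Matrix.mulVec, Finset.mul_sum, star_trivial]
      refine this.trans (le_of_eq ?_)
      refine Finset.sum_congr rfl fun i _ => Finset.sum_congr rfl fun k _ => ?_
      ring
  obtain ⟨R, hR⟩ := CStarAlgebra.nonneg_iff_eq_star_mul_self.mp this.nonneg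
  refine ⟨R, fun i k => ?_⟩
  rw [hR]
  simp [Matrix.mul_apply, Matrix.star_apply]

lemma BT_add_le (m : ℕ) (q r : HT) : BT m (q + r) (q + r) ≤ 2 * BT m q q + 2 * BT m r r := by
  have h := BT_nonneg m (q - r)
  have h2 := BT_comm m q r
  simp only [map_add, map_sub, LinearMap.add_apply, LinearMap.sub_apply] at h ⊢
  linarith

lemma BT_pyth {m : ℕ} {q r : HT} (h : BT m q r = 0) : BT m (q + r) (q + r) = BT m q q + BT m r r := by
  have h2 := BT_comm m q r
  simp only [map_add, LinearMap.add_apply]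
  linarith

lemma proj_bounds {m p : ℕ} (hm2 : m % 2 = 0) (hm : 0 < m) (hp : 1 ≤ p) (U : Submodule ℝ HT)
    (hU : GS m p true ≤ U) (hU2 : U ≤ S0T m p) {x g : HT} (hx : x ∈ ST m p) (hg : g ∈ U)
    (ho : ∀ z ∈ U, BT m (x - g) z = 0) :
    BT m g g ≤ BT m x x ∧ BT m (x - g) (x - g) ≤ 3 / (m : ℝ) ^ 2 * BT m (DT x) (DT x) ∧
    BT m (DT g) (DT g) ≤ 74 * BT m (DT x) (DT x) := by
  have hmR : (0 : ℝ) < m := by exact_mod_cast hm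
  have hxC : x ∈ CS m := hx.2 0 (by omega)
  obtain ⟨s, hs, hs1, hs2⟩ := approx_main hm2 hm hp hxC hx.1.1
  have h1 := BT_pyth (ho g hg)
  rw [sub_add_cancel] at h1
  have h2 := BT_pyth (ho (g - s) (sub_mem hg (hU hs)))
  rw [sub_add_sub_cancel] at h2
  have p1 := BT_nonneg m (x - g)
  have p2 := BT_nonneg m (g - s)
  have h3 := inverse_T hm hp (hU2 (sub_mem hg (hU hs)))
  have h4 := BT_add_le m (DT (g - s)) (DT s)
  rw [← map_add, sub_add_cancel] at h4
  refine ⟨by linarith, by linarith, ?_⟩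
  have h5 : 12 * (m : ℝ) ^ 2 * BT m (g - s) (g - s) ≤
      12 * (m : ℝ) ^ 2 * (3 / (m : ℝ) ^ 2 * BT m (DT x) (DT x)) := by
    gcongr
    linarith
  have h6 : 12 * (m : ℝ) ^ 2 * (3 / (m : ℝ) ^ 2 * BT m (DT x) (DT x)) = 36 * BT m (DT x) (DT x) := by
    field_simp; ring
  linarith

lemma exists_OneD {m p : ℕ} (hm2 : m % 2 = 0) (hm : 0 < m) (hp : 1 ≤ p) :
    ∃ (O : OneD (m : ℝ)) (b : Fin O.n → HT),
      (∀ i, b i ∈ ST m p) ∧ (∀ q ∈ ST m p, ∃ x, q = lc b x) ∧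
      (∀ i k, BT m (b i) (b k) = if i = k then 1 else 0) ∧
      (∀ i, O.t i = false → b i ∈ S0T m p) ∧
      (∀ i, O.t i = true → ∀ u ∈ S0T m p, BT m (b i) u = 0) ∧
      (∀ i k, BT m (DT (b i)) (DT (b k)) = ∑ l, O.R l i * O.R l k) ∧
      (∀ x, lc b (O.P.mulVec x) ∈ GS m p true) := by
  have hST : ST m p ≤ FD m p := fun q hq => hq.1
  have := fin_of_le_FD hST
  have hS0 : S0T m p ≤ ST m p := fun q hq => hq.1
  have hGS0 := GS_le_S0T m p
  obtain ⟨n, b', t, h1, h2, h3⟩ := bl_adapted_basis ((BT m).domRestrict₁₂ (ST m p) (ST m p))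
    (fun x y => BT_comm m x y) (fun x => BT_nonneg m x)
    (fun x hx => Subtype.ext (BT_def x.2.1.1 hx)) ((S0T m p).comap (ST m p).subtype)
  let b : Fin n → HT := fun i => b' i
  have hb : ∀ i, b i ∈ ST m p := fun i => (b' i).2
  have hspan : ∀ q ∈ ST m p, ∃ x, q = lc b x := by
    intro q hq
    refine ⟨b'.repr ⟨q, hq⟩, ?_⟩
    have := congrArg Subtype.val (b'.sum_repr ⟨q, hq⟩)
    rw [lc_apply]
    refine this.symm.trans ?_
    rw [AddSubmonoidClass.coe_finset_sum]
    rfl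
  have horth : ∀ i k, BT m (b i) (b k) = if i = k then 1 else 0 := h1
  have ht0 : ∀ i, t i = false → b i ∈ S0T m p := h2
  have ht1 : ∀ i, t i = true → ∀ u ∈ S0T m p, BT m (b i) u = 0 :=
    fun i hi u hu => h3 i hi ⟨u, hS0 hu⟩ hu
  have hBD : ∀ q r, ((BT m).compl₁₂ DT DT) q r = BT m (DT q) (DT r) := fun q r => rfl
  obtain ⟨R, hR⟩ := psd_factor (n := n) (fun i k => BT m (DT (b i)) (DT (b k)))
    (fun i k => BT_comm m _ _) (fun x => by
      have := lc_form b ((BT m).compl₁₂ DT DT) x x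
      simp only [hBD] at this
      rw [← this]
      exact BT_nonneg m _)
  have hmem : ∀ x, lc b x ∈ ST m p := fun x => by
    rw [lc_apply]
    exact Submodule.sum_mem _ fun i _ => Submodule.smul_mem _ _ (hb i)
  have e0 : ∀ x, nsq x = BT m (lc b x) (lc b x) := by
    intro x
    rw [lc_form]
    simp [horth, nsq, sq]
  have e1 : ∀ x, nsq (R.mulVec x) = BT m (DT (lc b x)) (DT (lc b x)) := by
    intro x
    have := lc_form b ((BT m).compl₁₂ DT DT) x x
    simp only [hBD] at this
    rw [this]
    simp only [hR, nsq, Matrix.mulVec, dotProduct, sq]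
    simp only [Finset.mul_sum]
    rw [Finset.sum_comm]
    refine Finset.sum_congr rfl fun i _ => ?_
    rw [Finset.sum_comm]
    refine Finset.sum_congr rfl fun k _ => ?_
    rw [Finset.sum_mul]
    refine Finset.sum_congr rfl fun l _ => ?_
    ring
  -- projections
  have hGfin := fin_of_le_FD (GS_le_FD m p true)
  have hproj := fun k => bl_exists_proj (BT m) (GS m p true)
    (fun x hx h => BT_def (GS_Z hx) h) (b k)
  choose g hg hgo using hproj
  have hgx : ∀ k, ∃ x, g k = lc b x := fun k => hspan _ (hS0 (hGS0 (hg k)))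
  choose P hP using hgx
  let PM : Matrix (Fin n) (Fin n) ℝ := fun i k => P k i
  have hPM : ∀ x, lc b (PM.mulVec x) = ∑ k, x k • g k := by
    intro x
    simp only [hP, lc_apply, Matrix.mulVec, dotProduct, PM, Finset.sum_smul, Finset.smul_sum]
    rw [Finset.sum_comm]
    refine Finset.sum_congr rfl fun i _ => Finset.sum_congr rfl fun k _ => ?_
    rw [smul_smul, mul_comm]
  have hPG : ∀ x, lc b (PM.mulVec x) ∈ GS m p true := fun x => by
    rw [hPM]
    exact Submodule.sum_mem _ fun i _ => Submodule.smul_mem _ _ (hg i)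
  have hPo : ∀ x, ∀ z ∈ GS m p true, BT m (lc b x - lc b (PM.mulVec x)) z = 0 := by
    intro x z hz
    rw [hPM, lc_apply, ← Finset.sum_sub_distrib]
    simp only [← smul_sub, map_sum, LinearMap.sum_apply, map_smul, LinearMap.smul_apply, hgo _ z hz]
    simp
  have bP := fun x => proj_bounds hm2 hm hp (GS m p true) le_rfl hGS0 (hmem x) (hPG x) (hPo x)
  have hdg : ∀ x (c : Bool), lc b ((dg t c).mulVec x) = ∑ i, if t i = c then x i • b i else 0 := by
    intro x c
    rw [lc_apply]
    refine Finset.sum_congr rfl fun i _ => ?_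
    rw [dg, Matrix.mulVec_diagonal]
    split_ifs <;> simp
  have hd0 : ∀ x, lc b ((dg t false).mulVec x) ∈ S0T m p := by
    intro x
    rw [hdg]
    refine Submodule.sum_mem _ fun i _ => ?_
    split_ifs with h
    · exact Submodule.smul_mem _ _ (ht0 i h)
    · exact zero_mem _
  have hd1 : ∀ x, lc b x - lc b ((dg t false).mulVec x) = lc b ((dg t true).mulVec x) := by
    intro x
    rw [hdg, hdg, lc_apply, ← Finset.sum_sub_distrib]
    refine Finset.sum_congr rfl fun i _ => ?_
    cases t i <;> simp
  have hdo : ∀ x, ∀ z ∈ S0T m p, BT m (lc b x - lc b ((dg t false).mulVec x)) z = 0 := by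
    intro x z hz
    rw [hd1, hdg, map_sum, LinearMap.sum_apply]
    refine Finset.sum_eq_zero fun i _ => ?_
    split_ifs with h
    · rw [map_smul, LinearMap.smul_apply, ht1 i h z hz, smul_zero]
    · simp
  have bd := fun x => proj_bounds hm2 hm hp (S0T m p) hGS0 le_rfl (hmem x) (hd0 x) (hdo x)
  have hm1 : (1 : ℝ) ≤ m := by exact_mod_cast hm
  refine ⟨⟨n, t, R, PM, by linarith, hm1, ?_, ?_, ?_, ?_, ?_⟩, b, hb, hspan, horth, ht0, ht1, hR, hPG⟩
  · intro x
    rw [← Matrix.mulVec_mulVec, e1, e0]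
    refine (inverse_T hm hp (hd0 x)).trans ?_
    gcongr
    exact (bd x).1
  · intro x
    rw [← Matrix.mulVec_mulVec, e1, e1, ← hd1, sub_eq_add_neg, map_add]
    refine (BT_add_le m _ _).trans ?_
    have := (bd x).2.2
    simp only [map_neg, LinearMap.neg_apply, neg_neg]
    linarith
  · intro x
    rw [e0, e0]; exact (bP x).1
  · intro x
    rw [e0, e1, Matrix.sub_mulVec, Matrix.one_mulVec, map_sub]; exact (bP x).2.1
  · intro x
    rw [← Matrix.mulVec_mulVec, e1, e1]; exact (bP x).2.2

end

section
open Polynomial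

/-- tensor synthesis map -/
def Psi (m : ℕ) {d n : ℕ} (B : Fin d → Fin n → HT) :
    ((Fin d → Fin n) → ℝ) →ₗ[ℝ] ((Fin d → ℝ) → ℝ) where
  toFun c := fun x => ∑ I, c I * ∏ j, pw m (B j (I j)) (x j)
  map_add' c c' := by ext x; simp [add_mul, Finset.sum_add_distrib]
  map_smul' r c := by ext x; simp [Finset.mul_sum, mul_assoc]

lemma Psi_apply (m : ℕ) {d n : ℕ} (B : Fin d → Fin n → HT) (c : (Fin d → Fin n) → ℝ)
    (x : Fin d → ℝ) : Psi m B c x = ∑ I, c I * ∏ j, pw m (B j (I j)) (x j) := rfl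

lemma cube_restrict (d : ℕ) : (volume : Measure (Fin d → ℝ)).restrict (cube d) =
    Measure.pi (fun _ : Fin d => (volume : Measure ℝ).restrict (Ioo (0:ℝ) 1)) := by
  rw [cube, volume_pi, Measure.restrict_pi_pi]

lemma Psi_mul (m : ℕ) {d n : ℕ} (B B' : Fin d → Fin n → HT) (c c' : (Fin d → Fin n) → ℝ) :
    (fun x => Psi m B c x * Psi m B' c' x) = fun x => ∑ I, ∑ J, (c I * c' J) *
      ∏ j, (pw m (B j (I j)) (x j) * pw m (B' j (J j)) (x j)) := by
  ext x
  simp only [Psi_apply, Finset.sum_mul_sum]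
  refine Finset.sum_congr rfl fun I _ => Finset.sum_congr rfl fun J _ => ?_
  rw [Finset.prod_mul_distrib]; ring

lemma Psi_term_int {m : ℕ} (hm : 0 < m) {d n : ℕ} (B B' : Fin d → Fin n → HT) (I J : Fin d → Fin n) :
    IntegrableOn (fun x : Fin d → ℝ => ∏ j, (pw m (B j (I j)) (x j) * pw m (B' j (J j)) (x j)))
      (cube d) := by
  rw [IntegrableOn, cube_restrict]
  exact Integrable.fintype_prod (f := fun j t => pw m (B j (I j)) t * pw m (B' j (J j)) t)
    fun j => pw_mul_integrable hm _ _

lemma Psi_mul_int {m : ℕ} (hm : 0 < m) {d n : ℕ} (B B' : Fin d → Fin n → HT) (c c' : (Fin d → Fin n) → ℝ) :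
    IntegrableOn (fun x => Psi m B c x * Psi m B' c' x) (cube d) := by
  rw [Psi_mul]
  refine integrable_finsetSum _ fun I _ => integrable_finsetSum _ fun J _ => ?_
  exact (Psi_term_int hm B B' I J).const_mul _

lemma Psi_ip {m : ℕ} (hm : 0 < m) {d n : ℕ} (B B' : Fin d → Fin n → HT) (c c' : (Fin d → Fin n) → ℝ) :
    ∫ x in cube d, Psi m B c x * Psi m B' c' x =
      ∑ I, ∑ J, (c I * c' J) * ∏ j, BT m (B j (I j)) (B' j (J j)) := by
  rw [Psi_mul, integral_finsetSum]
  · refine Finset.sum_congr rfl fun I _ => ?_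
    rw [integral_finsetSum]
    · refine Finset.sum_congr rfl fun J _ => ?_
      rw [integral_const_mul, cube_restrict,
        integral_fintype_prod_eq_prod (f := fun j t => pw m (B j (I j)) t * pw m (B' j (J j)) t)]
      congr 1
      exact Finset.prod_congr rfl fun j _ => pw_ip hm _ _
    · intro J _
      exact (Psi_term_int hm B B' I J).const_mul _
  · intro I _
    refine integrable_finsetSum _ fun J _ => ?_
    exact (Psi_term_int hm B B' I J).const_mul _

lemma pd_Psi {m : ℕ} (hm : 0 < m) {d n : ℕ} (b : Fin n → HT) (c : (Fin d → Fin n) → ℝ) (j : Fin d) :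
    ∀ᵐ x ∂((volume : Measure (Fin d → ℝ)).restrict (cube d)),
      pd d j (Psi m (fun _ => b) c) x =
        Psi m (Function.update (fun _ => b) j (fun i => DT (b i))) c x := by
  apply ae_restrict_of_ae
  have h1 : ∀ᵐ t ∂(volume : Measure ℝ), ∀ i : Fin m, t ≠ ((i : ℕ) : ℝ) / m := by
    rw [ae_all_iff]; intro i; exact Measure.ae_ne _ _
  have h2 : ∀ᵐ x ∂(volume : Measure (Fin d → ℝ)), ∀ i : Fin m, x j ≠ ((i : ℕ) : ℝ) / m :=
    (Measure.quasiMeasurePreserving_eval (fun _ : Fin d => (volume : Measure ℝ)) j).ae h1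
  filter_upwards [h2] with x hx
  have hd : ∀ i : Fin n, HasDerivAt (pw m (b i)) (pw m (DT (b i)) (x j)) (x j) := fun i =>
    pw_hasDerivAt_off hm fun k hk => hx ⟨k, hk⟩
  have key : HasDerivAt (fun t => Psi m (fun _ => b) c (Function.update x j t))
      (Psi m (Function.update (fun _ => b) j (fun i => DT (b i))) c x) (x j) := by
    simp only [Psi_apply]
    apply HasDerivAt.fun_sum
    intro I _
    apply HasDerivAt.const_mul
    have e1 : (fun t => ∏ k, pw m (b (I k)) (Function.update x j t k)) =
        fun t => pw m (b (I j)) t * ∏ k ∈ Finset.univ.erase j, pw m (b (I k)) (x k) := by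
      ext t
      rw [← Finset.mul_prod_erase _ _ (Finset.mem_univ j)]
      congr 1
      · simp
      · refine Finset.prod_congr rfl fun k hk => ?_
        rw [Function.update_of_ne (Finset.ne_of_mem_erase hk)]
    rw [e1, ← Finset.mul_prod_erase _ _ (Finset.mem_univ j)]
    have e2 : ∏ k ∈ Finset.univ.erase j, pw m (Function.update (fun _ => b) j (fun i => DT (b i)) k (I k)) (x k)
       = ∏ k ∈ Finset.univ.erase j, pw m (b (I k)) (x k) := by
      refine Finset.prod_congr rfl fun k hk => ?_
      rw [Function.update_of_ne (Finset.ne_of_mem_erase hk)]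
    rw [e2, Function.update_self]
    exact (hd _).mul_const _
  exact key.deriv

lemma ipA_act {d n : ℕ} (j : Fin d) (T : Matrix (Fin n) (Fin n) ℝ) (c e : (Fin d → Fin n) → ℝ) :
    ipA _ c (act j T.transpose e) = ipA _ (act j T c) e := by
  rw [ipA_apply, ipA_apply, sum_split j, sum_split j]
  refine Finset.sum_congr rfl fun y _ => ?_
  simp only [act_apply, split_update, Finset.mul_sum, Finset.sum_mul]
  rw [Finset.sum_comm]
  refine Finset.sum_congr rfl fun i _ => Finset.sum_congr rfl fun k _ => ?_
  simp [Equiv.funSplitAt]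
  ring

lemma sum_delta_off {d n : ℕ} (j : Fin d) (T : Matrix (Fin n) (Fin n) ℝ) (c' : (Fin d → Fin n) → ℝ)
    (I : Fin d → Fin n) :
    ∑ J, c' J * ∏ k, (if k = j then T (I k) (J k) else if I k = J k then 1 else 0) = act j T c' I := by
  rw [act_apply]
  symm
  refine Fintype.sum_of_injective (fun i => Function.update I j i) (Function.update_injective I j) _ _ ?_ ?_
  · intro J hJ
    by_cases h : ∀ k, k ≠ j → I k = J k
    · exfalso
      apply hJ
      refine ⟨J j, ?_⟩
      ext1 k
      by_cases hk : k = j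
      · subst hk; simp
      · simp [Function.update_of_ne hk, h k hk]
    · push Not at h
      obtain ⟨k, hk, hne⟩ := h
      rw [Finset.prod_eq_zero (Finset.mem_univ k), mul_zero]
      simp [hk, hne]
  · intro i
    rw [mul_comm]
    congr 1
    rw [Finset.prod_eq_single j]
    · simp
    · intro k _ hk
      simp [hk]
    · simp

end

section
open Polynomial

lemma ipd_Psi {m : ℕ} (hm : 0 < m) {d n : ℕ} (b : Fin n → HT)
    (hb : ∀ i k, BT m (b i) (b k) = if i = k then 1 else 0) (c c' : (Fin d → Fin n) → ℝ) :
    ipd d (Psi m (fun _ => b) c) (Psi m (fun _ => b) c') = ipA _ c c' := by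
  rw [ipd, Psi_ip hm, ipA_apply]
  refine Finset.sum_congr rfl fun I _ => ?_
  rw [Finset.sum_eq_single I]
  · simp [hb]
  · intro J _ hJ
    obtain ⟨k, hk⟩ := Function.ne_iff.1 hJ
    rw [Finset.prod_eq_zero (Finset.mem_univ k), mul_zero]
    rw [hb, if_neg (Ne.symm hk)]
  · simp

lemma pd_ae {m : ℕ} (hm : 0 < m) {d n : ℕ} (b : Fin n → HT) (c c' : (Fin d → Fin n) → ℝ) (j : Fin d) :
    (fun x => pd d j (Psi m (fun _ => b) c) x * pd d j (Psi m (fun _ => b) c') x)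
      =ᵐ[(volume : Measure (Fin d → ℝ)).restrict (cube d)]
      fun x => Psi m (Function.update (fun _ => b) j (fun i => DT (b i))) c x *
        Psi m (Function.update (fun _ => b) j (fun i => DT (b i))) c' x := by
  filter_upwards [pd_Psi hm b c j, pd_Psi hm b c' j] with x h1 h2
  rw [h1, h2]

lemma pd_int {m : ℕ} (hm : 0 < m) {d n : ℕ} (b : Fin n → HT) (c c' : (Fin d → Fin n) → ℝ) (j : Fin d) :
    IntegrableOn (fun x => pd d j (Psi m (fun _ => b) c) x * pd d j (Psi m (fun _ => b) c') x) (cube d) :=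
  (Psi_mul_int hm _ _ c c').congr (pd_ae hm b c c' j).symm

lemma pd_ip {m : ℕ} (hm : 0 < m) {d n : ℕ} (b : Fin n → HT) (R : Matrix (Fin n) (Fin n) ℝ)
    (hb : ∀ i k, BT m (b i) (b k) = if i = k then 1 else 0)
    (hR : ∀ i k, BT m (DT (b i)) (DT (b k)) = ∑ l, R l i * R l k)
    (c c' : (Fin d → Fin n) → ℝ) (j : Fin d) :
    ∫ x in cube d, pd d j (Psi m (fun _ => b) c) x * pd d j (Psi m (fun _ => b) c') x =
      ipA _ (act j R c) (act j R c') := by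
  rw [integral_congr_ae (pd_ae hm b c c' j), Psi_ip hm, ← ipA_act, ← act_mul, ipA_apply]
  refine Finset.sum_congr rfl fun I _ => ?_
  rw [← sum_delta_off, Finset.mul_sum]
  refine Finset.sum_congr rfl fun J _ => ?_
  rw [mul_assoc]
  congr 2
  refine Finset.prod_congr rfl fun k _ => ?_
  by_cases hk : k = j
  · subst hk
    simp only [Function.update_self, if_true, hR, Matrix.mul_apply, Matrix.transpose_apply]
  · simp only [Function.update_of_ne hk, if_neg hk, hb]

lemma aForm_Psi {m : ℕ} (hm : 0 < m) {d : ℕ} (O : OneD (m : ℝ)) (b : Fin O.n → HT)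
    (hb : ∀ i k, BT m (b i) (b k) = if i = k then 1 else 0)
    (hR : ∀ i k, BT m (DT (b i)) (DT (b k)) = ∑ l, O.R l i * O.R l k)
    (c c' : (Fin d → Fin O.n) → ℝ) :
    aForm d (Psi m (fun _ => b) c) (Psi m (fun _ => b) c') = aA O d c c' := by
  rw [aForm, integral_add, integral_finsetSum, aA_apply]
  · congr 1
    · exact Finset.sum_congr rfl fun j _ => pd_ip hm b O.R hb hR c c' j
    · exact ipd_Psi hm b hb c c'
  · exact fun j _ => pd_int hm b c c' j
  · exact integrable_finsetSum _ fun j _ => pd_int hm b c c' j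
  · exact Psi_mul_int hm _ _ c c'

lemma smootherForm_Psi {m : ℕ} (hm : 0 < m) {d : ℕ} (O : OneD (m : ℝ)) (b : Fin O.n → HT)
    (hb : ∀ i k, BT m (b i) (b k) = if i = k then 1 else 0)
    (hR : ∀ i k, BT m (DT (b i)) (DT (b k)) = ∑ l, O.R l i * O.R l k) (α : Fin d → Bool)
    (c c' : (Fin d → Fin O.n) → ℝ) :
    smootherForm d m α (Psi m (fun _ => b) c) (Psi m (fun _ => b) c') = lA O d α c c' := by
  rw [smootherForm, lA_apply, ipd_Psi hm b hb]
  congr 1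
  refine Finset.sum_congr rfl fun j _ => ?_
  rw [pd_ip hm b O.R hb hR]

/-- rank-one array -/
def tp {d n : ℕ} (y : Fin d → Fin n → ℝ) : (Fin d → Fin n) → ℝ := fun I => ∏ j, y j (I j)

lemma pw_sum {m n : ℕ} (y : Fin n → ℝ) (b : Fin n → HT) (x : ℝ) :
    pw m (lc b y) x = ∑ i, y i * pw m (b i) x := by
  simp [pw, lc_apply, Polynomial.eval_finsetSum]

lemma Psi_tp {m d n : ℕ} (b : Fin n → HT) (y : Fin d → Fin n → ℝ) :
    Psi m (fun _ => b) (tp y) = fun x => ∏ j, pw m (lc b (y j)) (x j) := by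
  ext x
  simp only [Psi_apply, pw_sum, tp]
  rw [Finset.prod_univ_sum, Fintype.piFinset_univ]
  refine Finset.sum_congr rfl fun I _ => ?_
  rw [Finset.prod_mul_distrib]

lemma exists_Psi {m p : ℕ} (hm : 0 < m) (hp : 1 ≤ p) {d n : ℕ} (b : Fin n → HT)
    (hs : ∀ q ∈ ST m p, ∃ x, q = lc b x) (u) (hu : u ∈ TensorSpline d m p) :
    ∃ c, u = Psi m (fun _ => b) c := by
  suffices h : TensorSpline d m p ≤ LinearMap.range (Psi m (d := d) (fun _ => b)) by
    obtain ⟨c, hc⟩ := h hu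
    exact ⟨c, hc.symm⟩
  rw [TensorSpline, Submodule.span_le]
  rintro u ⟨f, hf, rfl⟩
  choose q hq hfq using fun i => isSpline_exists hm hp (hf i)
  choose y hy using fun i => hs (q i) (hq i)
  refine ⟨tp y, ?_⟩
  rw [Psi_tp]
  ext x
  refine Finset.prod_congr rfl fun i _ => ?_
  rw [hfq i, hy i]

lemma isSplineC_basis {m p : ℕ} (hm : 0 < m) (hp : 1 ≤ p) {n : ℕ} (t : Fin n → Bool) (b : Fin n → HT)
    (hST : ∀ i, b i ∈ ST m p)
    (h0 : ∀ i, t i = false → b i ∈ S0T m p)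
    (h1 : ∀ i, t i = true → ∀ u ∈ S0T m p, BT m (b i) u = 0) (i : Fin n) :
    IsSplineC m p (t i) (pw m (b i)) := by
  cases h : t i
  · exact pw_isSpline0 hm hp (h0 i h)
  · refine ⟨pw_isSpline hm hp (hST i), fun v hv => ?_⟩
    obtain ⟨q, hq, rfl⟩ := isSpline0_exists hm hp hv
    rw [ip0, pw_ip hm, h1 i h q hq]

lemma res_mem {m p : ℕ} (hm : 0 < m) (hp : 1 ≤ p) {d n : ℕ} (t : Fin n → Bool) (b : Fin n → HT)
    (hST : ∀ i, b i ∈ ST m p)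
    (h0 : ∀ i, t i = false → b i ∈ S0T m p)
    (h1 : ∀ i, t i = true → ∀ u ∈ S0T m p, BT m (b i) u = 0) (α : Fin d → Bool)
    (c : (Fin d → Fin n) → ℝ) :
    Psi m (fun _ => b) (res t α c) ∈ TensorSplineSub d m p α := by
  have : Psi m (fun _ => b) (res t α c) = ∑ I, (res t α c I) • fun x : Fin d → ℝ => ∏ j, pw m (b (I j)) (x j) := by
    ext x; simp [Psi_apply]
  rw [this]
  refine Submodule.sum_mem _ fun I _ => ?_
  rw [res_apply]
  split_ifs with h
  · refine Submodule.smul_mem _ _ (Submodule.subset_span ⟨fun j => pw m (b (I j)), fun j => ?_, rfl⟩)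
    rw [← h]
    exact isSplineC_basis hm hp t b hST h0 h1 (I j)
  · simp

lemma isSplineC_coef {m p : ℕ} (hm : 0 < m) (hp : 1 ≤ p) {n : ℕ} (t : Fin n → Bool) (b : Fin n → HT)
    (hs : ∀ q ∈ ST m p, ∃ x, q = lc b x)
    (hb : ∀ i k, BT m (b i) (b k) = if i = k then 1 else 0)
    (h0 : ∀ i, t i = false → b i ∈ S0T m p)
    (h1 : ∀ i, t i = true → ∀ u ∈ S0T m p, BT m (b i) u = 0) (a : Bool) (f : ℝ → ℝ)
    (hf : IsSplineC m p a f) : ∃ y : Fin n → ℝ, f = pw m (lc b y) ∧ ∀ i, t i ≠ a → y i = 0 := by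
  have co : ∀ (y : Fin n → ℝ) i, BT m (b i) (lc b y) = y i := by
    intro y i
    simp [lc_apply, hb]
  cases a
  · obtain ⟨q, hq, rfl⟩ := isSpline0_exists hm hp hf
    obtain ⟨y, rfl⟩ := hs q hq.1
    refine ⟨y, rfl, fun i hi => ?_⟩
    rw [← co y i]
    exact h1 i (by simpa using hi) _ hq
  · obtain ⟨hf1, hf2⟩ := hf
    obtain ⟨q, hq, rfl⟩ := isSpline_exists hm hp hf1
    obtain ⟨y, rfl⟩ := hs q hq
    refine ⟨y, rfl, fun i hi => ?_⟩
    have := hf2 _ (pw_isSpline0 hm hp (h0 i (by simpa using hi)))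
    rw [ip0, pw_ip hm, BT_comm, co] at this
    exact this

lemma exists_Psi_sub {m p : ℕ} (hm : 0 < m) (hp : 1 ≤ p) {d n : ℕ} (t : Fin n → Bool) (b : Fin n → HT)
    (hs : ∀ q ∈ ST m p, ∃ x, q = lc b x)
    (hb : ∀ i k, BT m (b i) (b k) = if i = k then 1 else 0)
    (h0 : ∀ i, t i = false → b i ∈ S0T m p)
    (h1 : ∀ i, t i = true → ∀ u ∈ S0T m p, BT m (b i) u = 0) (α : Fin d → Bool)
    (u) (hu : u ∈ TensorSplineSub d m p α) :
    ∃ c, u = Psi m (fun _ => b) c ∧ res t α c = c := by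
  suffices h : TensorSplineSub d m p α ≤
      LinearMap.range (Psi m (d := d) (fun _ => b) ∘ₗ res t α) by
    obtain ⟨c, hc⟩ := h hu
    refine ⟨res t α c, hc.symm, ?_⟩
    rw [res_res, if_pos rfl]
  rw [TensorSplineSub, Submodule.span_le]
  rintro u ⟨f, hf, rfl⟩
  choose y hy hy0 using fun i => isSplineC_coef hm hp t b hs hb h0 h1 (α i) (f i) (hf i)
  refine ⟨tp y, ?_⟩
  have : res t α (tp y) = tp y := by
    ext I
    rw [res_apply]
    split_ifs with h
    · rfl
    · obtain ⟨k, hk⟩ := Function.ne_iff.1 h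
      exact (Finset.prod_eq_zero (Finset.mem_univ k) (hy0 k _ hk)).symm
  rw [LinearMap.comp_apply, this, Psi_tp]
  ext x
  refine Finset.prod_congr rfl fun i _ => ?_
  rw [hy i]

lemma coarse_le {m p d : ℕ} (hm2 : m % 2 = 0) : TensorSplineCoarse d m p ≤ TensorSpline d m p := by
  rw [TensorSplineCoarse, TensorSpline, Submodule.span_le]
  rintro u ⟨f, hf, rfl⟩
  exact Submodule.subset_span ⟨f, fun i => isSpline_of_coarse hm2 (hf i), rfl⟩

/-- arrays with directions in `l` in the good space -/
def XS {d n : ℕ} (G : Set (Fin n → ℝ)) (l : List (Fin d)) : Submodule ℝ ((Fin d → Fin n) → ℝ) :=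
  Submodule.span ℝ {c | ∃ y, (∀ j ∈ l, y j ∈ G) ∧ c = tp y}

lemma XS_nil {d n : ℕ} (G : Set (Fin n → ℝ)) (c : (Fin d → Fin n) → ℝ) : c ∈ XS G [] := by
  have : c = ∑ I, c I • tp (fun j => (Pi.single (I j) 1 : Fin n → ℝ)) := by
    ext J
    rw [Finset.sum_apply, Finset.sum_eq_single J]
    · simp [tp]
    · intro I _ hI
      obtain ⟨k, hk⟩ := Function.ne_iff.1 hI
      rw [Pi.smul_apply, tp, Finset.prod_eq_zero (Finset.mem_univ k), smul_zero]
      exact Pi.single_eq_of_ne (Ne.symm hk) _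
    · simp
  rw [this]
  exact Submodule.sum_mem _ fun I _ => Submodule.smul_mem _ _ (Submodule.subset_span ⟨_, by simp, rfl⟩)

lemma act_tp {d n : ℕ} (j : Fin d) (T : Matrix (Fin n) (Fin n) ℝ) (y : Fin d → Fin n → ℝ) :
    act j T (tp y) = tp (Function.update y j (T.mulVec (y j))) := by
  ext I
  rw [act_apply, tp, ← Finset.mul_prod_erase _ _ (Finset.mem_univ j), Function.update_self,
    Matrix.mulVec, dotProduct, Finset.sum_mul]
  refine Finset.sum_congr rfl fun i _ => ?_
  rw [tp, ← Finset.mul_prod_erase _ _ (Finset.mem_univ j), Function.update_self, mul_assoc]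
  congr 2
  refine Finset.prod_congr rfl fun k hk => ?_
  rw [Function.update_of_ne (Finset.ne_of_mem_erase hk), Function.update_of_ne (Finset.ne_of_mem_erase hk)]

lemma XS_act {d n : ℕ} (G : Set (Fin n → ℝ)) (j : Fin d) (T : Matrix (Fin n) (Fin n) ℝ)
    (hT : ∀ x, T.mulVec x ∈ G) (l : List (Fin d)) (c) (hc : c ∈ XS G l) : act j T c ∈ XS G (j :: l) := by
  suffices h : XS G l ≤ (XS G (j :: l)).comap (act j T) from h hc
  rw [XS, Submodule.span_le]
  rintro c ⟨y, hy, rfl⟩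
  show act j T (tp y) ∈ XS G (j :: l)
  rw [act_tp]
  refine Submodule.subset_span ⟨_, fun k hk => ?_, rfl⟩
  by_cases h : k = j
  · subst h; rw [Function.update_self]; exact hT _
  · rw [Function.update_of_ne h]
    exact hy k ((List.mem_cons.1 hk).resolve_left h)

lemma wl_XS {M : ℝ} (O : OneD M) {d : ℕ} (G : Set (Fin O.n → ℝ)) (hT : ∀ x, O.P.mulVec x ∈ G)
    (v : (Fin d → Fin O.n) → ℝ) (l : List (Fin d)) : wl O v l ∈ XS G l := by
  induction l with
  | nil => exact XS_nil G v
  | cons j l ih => exact XS_act G j O.P hT l _ ih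

lemma wl_coarse {m p : ℕ} (hm2 : m % 2 = 0) (hm : 0 < m) (hp : 1 ≤ p) {d : ℕ} (O : OneD (m : ℝ)) (b : Fin O.n → HT)
    (hP : ∀ x, lc b (O.P.mulVec x) ∈ GS m p true) (v : (Fin d → Fin O.n) → ℝ) :
    Psi m (fun _ => b) (wl O v (List.finRange d)) ∈ TensorSplineCoarse d m p := by
  have h := wl_XS O {y | lc b y ∈ GS m p true} hP v (List.finRange d)
  suffices h' : XS {y | lc b y ∈ GS m p true} (List.finRange d) ≤
      (TensorSplineCoarse d m p).comap (Psi m (fun _ => b)) from h' h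
  rw [XS, Submodule.span_le]
  rintro c ⟨y, hy, rfl⟩
  show Psi m (fun _ => b) (tp y) ∈ TensorSplineCoarse d m p
  rw [Psi_tp]
  refine Submodule.subset_span ⟨fun j => pw m (lc b (y j)), fun j => ?_, rfl⟩
  have hj := hy j (List.mem_finRange j)
  exact pw_isSpline_coarse hm2 hm hp (GS_le_S0T m p hj).1 (GS_K hm2 hj)

end

section
open Polynomial

lemma tg_core (d : ℕ) (C : ℝ) (hC : 0 < C)
    (hCa : ∀ (M : ℝ) (O : OneD M) (v : (Fin d → Fin O.n) → ℝ),
      LA O d (v - wl O v (List.finRange d)) (v - wl O v (List.finRange d)) ≤ C * aA O d v v)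
    (τ : ℝ) (hτ : 0 < τ) (hτC : τ ≤ C) (hτd : τ * 2 ^ d ≤ 1)
    (m p : ℕ) (hm2 : m % 2 = 0) (hm : 0 < m) (hp : 1 ≤ p)
    (e0 e1 ef : (Fin d → ℝ) → ℝ) (he0 : e0 ∈ TensorSpline d m p)
    (hs : SmoothStep d m p τ e0 e1) (hc : CoarseCorrection d m p e1 ef) :
    0 ≤ aForm d e0 e0 ∧ aForm d ef ef ≤ (1 - τ / C) * aForm d e0 e0 := by
  obtain ⟨O, b, hST, hsp, hb, h0, h1, hR, hP⟩ := exists_OneD hm2 hm hp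
  obtain ⟨c, rfl⟩ := exists_Psi hm hp b hsp e0 he0
  obtain ⟨w, hw, rfl⟩ := hs
  obtain ⟨g, ⟨hg, hgo⟩, rfl⟩ := hc
  choose W hW hWr using fun α => exists_Psi_sub hm hp O.t b hsp hb h0 h1 α (w α) (hw α).1
  obtain ⟨cg, rfl⟩ := exists_Psi hm hp b hsp g (coarse_le hm2 hg)
  have ew : ∑ α, w α = Psi m (fun _ => b) (∑ α, W α) := by
    rw [map_sum]; exact Finset.sum_congr rfl fun α _ => hW α
  have e1 : Psi m (fun _ => b) c - τ • ∑ α, w α - Psi m (fun _ => b) cg =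
      Psi m (fun _ => b) (c - τ • (∑ α, W α) - cg) := by
    rw [ew, map_sub, map_sub, map_smul]
  rw [e1] at hgo ⊢
  have hform := fun x y => aForm_Psi hm (d := d) O b hb hR x y
  rw [hform, hform]
  refine ⟨aA_nonneg O d c, ?_⟩
  set v := c - τ • (∑ α, W α) - cg with hv
  refine bl_twogrid (aA O d) (LA O d) (aA_comm' O d) (aA_nonneg O d) (LA_comm O d)
    (fun x => (nsq_nonneg x).trans (LA_ge O d x))
    (fun x hx => nsq_eq_zero ((LA_ge O d x).trans hx.le)) τ C hτ hC hτC ?_ c (∑ α, W α) v ?_ ?_ ?_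
  · intro x
    have := aA_le_LA O d x
    have h2 := (nsq_nonneg x).trans (LA_ge O d x)
    calc τ * aA O d x x ≤ τ * (2 ^ d * LA O d x x) := mul_le_mul_of_nonneg_left this hτ.le
      _ = (τ * 2 ^ d) * LA O d x x := by ring
      _ ≤ 1 * LA O d x x := mul_le_mul_of_nonneg_right hτd h2
      _ = _ := one_mul _
  · intro z
    rw [LA_apply]
    conv_rhs => rw [← sum_res O.t z, map_sum]
    refine Finset.sum_congr rfl fun α _ => ?_
    have : res O.t α (∑ α, W α) = W α := by
      rw [map_sum, Finset.sum_eq_single α]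
      · exact hWr α
      · intro β _ hβ
        rw [← hWr β, res_res, if_neg (Ne.symm hβ)]
      · simp
    rw [this, ← smootherForm_Psi hm O b hb hR, ← hW α,
      (hw α).2 _ (res_mem hm hp O.t b hST h0 h1 α z), hform]
  · refine ⟨wl O v (List.finRange d), ?_, hCa _ O v⟩
    rw [← hform]
    exact hgo _ (wl_coarse hm2 hm hp O b hP v)
  · have h3 := hgo _ hg
    rw [hform] at h3
    conv_lhs => rw [hv, map_sub, ← hv, h3, sub_zero]

end

/-- main theorem: for every `d ≥ 1` there exist a damping
parameter `τ > 0` and a number of smoothing steps `ν`, independent of `h = 1/m` and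
`p`, such that the two-grid method on `S^d` with coarse space `(S_c)^d` and the
additive subspace correction smoother built from the operators `L_α` (obtained from
`A_α` by replacing every `K₀` by `σM₀`, `σ = 12h⁻²`) contracts the error in the
energy norm `‖·‖_A` with a rate `q < 1` that does not depend on `h` or `p`. -/
theorem twogrid_robust_convergence :
    ∀ d : ℕ, 1 ≤ d →
      ∃ τ : ℝ, 0 < τ ∧ ∃ ν : ℕ, 0 < ν ∧ ∃ q : ℝ, 0 ≤ q ∧ q < 1 ∧
        ∀ m p : ℕ, m % 2 = 0 → 2 ≤ m → 1 ≤ p →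
          ∀ e : ℕ → (Fin d → ℝ) → ℝ, e 0 ∈ TensorSpline d m p →
            (∀ k < ν, SmoothStep d m p τ (e k) (e (k + 1))) →
            ∀ efinal : (Fin d → ℝ) → ℝ, CoarseCorrection d m p (e ν) efinal →
              Real.sqrt (aForm d efinal efinal) ≤
                q * Real.sqrt (aForm d (e 0) (e 0)) := by
  intro d _
  obtain ⟨C, hC, hCa⟩ := LA_approx d
  have h2 : (0:ℝ) < 2 ^ d := by positivity
  have hτ : (0:ℝ) < 1 / 2 ^ d := by positivity
  set τ : ℝ := 1 / 2 ^ d with hτe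
  have hC' : 0 < C + τ := by linarith
  have hr : 0 < τ / (C + τ) := div_pos hτ hC'
  have hr1 : τ / (C + τ) ≤ 1 := by rw [div_le_one hC']; linarith
  refine ⟨τ, hτ, 1, one_pos, Real.sqrt (1 - τ / (C + τ)), Real.sqrt_nonneg _, ?_, ?_⟩
  · rw [Real.sqrt_lt' one_pos]; linarith
  · intro m p hm2 hm hp e he hs ef hef
    obtain ⟨_, h4⟩ := tg_core d (C + τ) hC' (fun M O v => (hCa M O v).trans
      (mul_le_mul_of_nonneg_right (by linarith) (aA_nonneg O d v))) τ hτ (by linarith)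
      (by rw [hτe]; exact (div_mul_cancel₀ 1 h2.ne').le) m p hm2 (by omega) hp (e 0) (e 1) ef he
      (hs 0 one_pos) hef
    rw [← Real.sqrt_mul (by linarith)]
    exact Real.sqrt_le_sqrt h4

end SplineMG
end
end
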